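/- Let F be a finite extension of ℚ₂ of degree m that contains a primitive cube root of unity. Then the number of Galois extensions of F with Galois group isomorphic to the alternating group A₄ is ν(F,A₄) = 4(2^{2m} − 1)/3. -/

import Mathlib

/-- `nu F G` is the number of intermediate fields `K` of a fixed algebraic closure of `F`
such that `K/F` is a finite Galois extension with Galois group isomorphic to `G`. -/
noncomputable def nu (F : Type*) [Field F] (G : Type*) [Group G] : ℕ :=
  Nat.card {K : IntermediateField F (AlgebraicClosure F) //
    FiniteDimensional F K ∧ IsGalois F K ∧ Nonempty ((K ≃ₐ[F] K) ≃* G)}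

/-!
An `A₄`-extension `K / F` contains a unique cubic subfield `L`, the fixed field of the Klein four
group, and `L / F` is cyclic. It contains exactly three subfields of degree six; they contain `L`,
and `K` is the normal closure of each of them. Conversely, let `L / F` be cyclic cubic and let
`a ∈ Lˣ` be a nonsquare. If `N(a)` is a square in `F`, then `√(σ(σ a))` lies in `L(√a, √(σ a))` for
a generator `σ` of `Gal(L / F)`, and this is an `A₄`-extension of `F`; if `N(a)` is not a square,
then `F(√N(a))` prevents `L(√a)` from lying in an `A₄`-extension, as `A₄` has no subgroup of index
two. Hence `3 ν(F, A₄)` is the number of cyclic cubic `L / F` times the number of nontrivial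
elements of the kernel of `N : Lˣ / Lˣ² → Fˣ / Fˣ²`. This norm map is surjective because `3` is odd,
so everything is reduced to the orders of `Eˣ / Eˣⁿ` for `n = 2, 3` and local fields `E`. These are
found by comparing all units with those congruent to `1` modulo `4`, on which taking `n`-th powers
is injective with image the units congruent to `1` modulo `4n`: there are `(9 - 1) / 2 = 4` cyclic
cubic `L`, and the kernel has order `2 ^ (3m + 2) / 2 ^ (m + 2) = 4 ^ m`.
-/

open Polynomial

section Counting

lemma card_eq_mul_card_of_existsUnique {X Y : Type*} (r : X → Y → Prop) {c : ℕ} (hc : c ≠ 0)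
    (hr : ∀ x, ∃! y, r x y) (hcard : ∀ y, Nat.card {x // r x y} = c) :
    Nat.card X = c * Nat.card Y := by
  choose f hf huniq using hr
  have hfiber (y : Y) : {x // f x = y} ≃ Fin c :=
    have : Finite {x // r x y} := Nat.finite_of_card_ne_zero (by rwa [hcard])
    (Equiv.subtypeEquivRight fun x ↦ ⟨fun h ↦ h ▸ hf x, fun h ↦ (huniq x y h).symm⟩).trans
      (Finite.equivFinOfCardEq (hcard y))
  have e : X ≃ Fin c × Y :=
    (Equiv.sigmaFiberEquiv f).symm.trans <| (Equiv.sigmaCongrRight hfiber).trans <|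
      (Equiv.sigmaEquivProd Y (Fin c)).trans (Equiv.prodComm Y (Fin c))
  rw [Nat.card_congr e, Nat.card_prod, Nat.card_fin]

lemma card_mem_and_ne_one {G : Type*} [Group G] (H : Subgroup G) :
    Nat.card {x // x ∈ H ∧ x ≠ 1} = Nat.card H - 1 :=
  Set.ncard_sdiff_singleton_of_mem H.one_mem

variable {A B : Type*} [CommGroup A] [CommGroup B]

/- Both sides compute `[A : f(C)]` up to the factor `[A : C ker f]`: one through `f(A)`, the other
through `C`. -/
lemma index_range_eq_relIndex_mul_card_ker (f : A →* A) (C : Subgroup A) [C.FiniteIndex]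
    (hC : C.map f ≤ C) (hker : C ⊓ f.ker = ⊥) :
    f.range.index = (C.map f).relIndex C * Nat.card f.ker := by
  have hcard : C.relIndex (C ⊔ f.ker) = Nat.card f.ker := by
    rw [Subgroup.relIndex_sup_left, ← Subgroup.inf_relIndex_right, hker,
      Subgroup.relIndex_bot_left]
  have hsup : (C ⊔ f.ker).index ≠ 0 :=
    (Subgroup.finiteIndex_of_le (le_sup_left : C ≤ C ⊔ f.ker)).index_ne_zero
  refine Nat.eq_of_mul_eq_mul_left (Nat.pos_of_ne_zero hsup) ?_
  calc (C ⊔ f.ker).index * f.range.index = (C.map f).index := (Subgroup.index_map C f).symm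
    _ = (C.map f).relIndex C * (C.relIndex (C ⊔ f.ker) * (C ⊔ f.ker).index) := by
      rw [Subgroup.relIndex_mul_index le_sup_left, Subgroup.relIndex_mul_index hC]
    _ = (C ⊔ f.ker).index * ((C.map f).relIndex C * Nat.card f.ker) := by rw [hcard]; ring

lemma index_range_powMonoidHom_of_mulEquiv (e : A ≃* B) (n : ℕ) :
    (powMonoidHom n : A →* A).range.index = (powMonoidHom n : B →* B).range.index := by
  have hmap : (powMonoidHom n : A →* A).range.map (e : A →* B) = (powMonoidHom n).range := by
    rw [← MonoidHom.range_comp]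
    ext b
    exact ⟨fun ⟨a, ha⟩ ↦ ⟨e a, by simpa using ha⟩, fun ⟨b', hb⟩ ↦ ⟨e.symm b', by simpa using hb⟩⟩
  rw [← hmap, Subgroup.index_map_equiv]

lemma index_range_powMonoidHom_prod (n : ℕ) :
    (powMonoidHom n : A × B →* A × B).range.index =
      (powMonoidHom n : A →* A).range.index * (powMonoidHom n : B →* B).range.index := by
  rw [← Subgroup.index_prod]
  congr 1
  ext ⟨a, b⟩
  simp only [MonoidHom.mem_range, powMonoidHom_apply, Subgroup.mem_prod, Prod.ext_iff, Prod.exists,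
    Prod.pow_fst, Prod.pow_snd]
  exact ⟨fun ⟨x, y, hx, hy⟩ ↦ ⟨⟨x, hx⟩, y, hy⟩, fun ⟨⟨x, hx⟩, y, hy⟩ ↦ ⟨x, y, hx, hy⟩⟩

lemma index_range_powMonoidHom_multiplicative_int (n : ℕ) :
    (powMonoidHom n : Multiplicative ℤ →* Multiplicative ℤ).range.index = n := by
  have hrange : (powMonoidHom n : Multiplicative ℤ →* Multiplicative ℤ).range =
      (AddSubgroup.zmultiples (n : ℤ)).toSubgroup := by
    ext x
    constructor
    · rintro ⟨y, rfl⟩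
      exact ⟨y.toAdd, by simp [mul_comm]⟩
    · rintro ⟨y, hy⟩
      exact ⟨Multiplicative.ofAdd y, Multiplicative.toAdd.injective (by simpa [mul_comm] using hy)⟩
  rw [hrange]
  exact (Int.index_zmultiples (n : ℤ)).trans (Int.natAbs_natCast n)

end Counting

section AdicComplete

variable {R : Type*} [CommRing R]

/- The Banach fixed point theorem for the adic topology. -/
lemma exists_isFixedPt_of_adic_contracting {I : Ideal R} [IsAdicComplete I R] {φ : R → R}
    (hφ : ∀ (k : ℕ) (x y : R), x - y ∈ I ^ k → φ x - φ y ∈ I ^ (k + 1)) :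
    ∃ x, Function.IsFixedPt φ x := by
  have hstep (k : ℕ) : φ^[k] 0 - φ^[k + 1] 0 ∈ I ^ k := by
    induction k with
    | zero => simp
    | succ k ih =>
      rw [Function.iterate_succ_apply' φ (k + 1), Function.iterate_succ_apply' φ k]
      rw [Function.iterate_succ_apply' φ k] at ih
      exact hφ k _ _ ih
  obtain ⟨x, hx⟩ := IsPrecomplete.prec (IsAdicComplete.toIsPrecomplete (I := I) (M := R))
    (f := fun k ↦ φ^[k] 0) ((AdicCompletion.isAdicCauchy_iff I R _).2 fun k ↦ by
      simpa only [smul_eq_mul, Ideal.mul_top, SModEq.sub_mem] using hstep k)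
  simp only [smul_eq_mul, Ideal.mul_top, SModEq.sub_mem] at hx
  refine ⟨x, sub_eq_zero.1 (IsHausdorff.haus (IsAdicComplete.toIsHausdorff (I := I)) _ fun k ↦ ?_)⟩
  simp only [smul_eq_mul, Ideal.mul_top, SModEq.sub_mem, sub_zero]
  have hlim : φ x - φ^[k + 1] 0 ∈ I ^ k := by
    rw [Function.iterate_succ_apply', ← neg_sub]
    exact neg_mem (Ideal.pow_le_pow_right k.le_succ (hφ k _ _ (hx k)))
  simpa using add_mem hlim (Ideal.pow_le_pow_right k.le_succ (hx (k + 1)))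

variable {π : R} [IsAdicComplete (Ideal.span {π}) R]

lemma exists_add_mul_eval_eq (h : R[X]) (v : R) : ∃ w, w + π * h.eval w = v := by
  obtain ⟨w, hw⟩ := exists_isFixedPt_of_adic_contracting (I := Ideal.span {π})
    (φ := fun w ↦ v - π * h.eval w) fun k x y hxy ↦ by
      rw [Ideal.span_singleton_pow, Ideal.mem_span_singleton] at hxy ⊢
      have hdvd : π * π ^ k ∣ π * (h.eval y - h.eval x) :=
        mul_dvd_mul_left π (hxy.trans (by simpa using (sub_dvd_eval_sub y x h).neg_left))
      rw [pow_succ']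
      convert hdvd using 1
      ring
  exact ⟨w, by rw [← sub_eq_iff_eq_add.1 hw.eq]⟩

variable (π) in
lemma isUnit_one_add_mul (x : R) : IsUnit (1 + π * x) := by
  have hπ : π ∈ (⊥ : Ideal R).jacobson :=
    IsAdicComplete.le_jacobson_bot (Ideal.span {π}) (Ideal.mem_span_singleton_self π)
  simpa [add_comm] using Ideal.mem_jacobson_bot.1 hπ x

end AdicComplete

section Units

variable {O : Type*} [CommRing O]

/-- The group `1 + aO` of units congruent to `1` modulo `a`, the analogue of the higher unit groups
of a local field. -/
def congruenceUnits (a : O) : Subgroup Oˣ :=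
  (Units.map (Ideal.Quotient.mk (Ideal.span {a}) : O →* O ⧸ Ideal.span {a})).ker

lemma mem_congruenceUnits {a : O} {u : Oˣ} : u ∈ congruenceUnits a ↔ a ∣ u - 1 := by
  rw [congruenceUnits, MonoidHom.mem_ker, Units.ext_iff, ← Ideal.mem_span_singleton,
    ← Ideal.Quotient.mk_eq_mk_iff_sub_mem]
  simp

lemma mk_eq_mk_iff_dvd_sub {a : O} {u v : Oˣ} :
    (u : Oˣ ⧸ congruenceUnits a) = v ↔ a ∣ u - v := by
  rw [eq_comm, QuotientGroup.eq, mem_congruenceUnits, ← Units.dvd_mul_left (u := v), mul_sub,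
    Units.val_mul, Units.mul_inv_cancel_left, mul_one]

lemma congruenceUnits_finiteIndex (a : O) [Finite (O ⧸ Ideal.span {a})] :
    (congruenceUnits a).FiniteIndex :=
  inferInstanceAs (MonoidHom.ker _).FiniteIndex

lemma exists_one_add_pow_eq (n : ℕ) :
    ∃ g : O[X], ∀ x : O, (1 + x) ^ n = 1 + n * x + x ^ 2 * g.eval x := by
  have hdvd : (X : O[X]) ^ 2 ∣ (1 + X) ^ n - (1 + (n : O[X]) * X) := by
    rw [X_pow_dvd_iff]
    intro i hi
    interval_cases i <;> simp [coeff_one_add_X_pow, coeff_one]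
  obtain ⟨g, hg⟩ := hdvd
  refine ⟨g, fun x ↦ ?_⟩
  have := congrArg (eval x) (sub_eq_iff_eq_add.1 hg)
  simp only [eval_add, eval_mul, eval_pow, eval_one, eval_X, eval_natCast] at this
  rw [this, add_comm]

lemma relIndex_congruenceUnits_mul [IsDomain O] {a b : O} (ha : a ≠ 0) (hba : b ∣ a)
    (hunit : ∀ x, IsUnit (1 + a * x)) :
    (congruenceUnits (a * b)).relIndex (congruenceUnits a) = Nat.card (O ⧸ Ideal.span {b}) := by
  let φ : Multiplicative O →* Oˣ ⧸ congruenceUnits (a * b) :=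
    { toFun w := (hunit w.toAdd).unit
      map_one' := by simp [← QuotientGroup.mk_one]
      map_mul' w w' := by
        rw [← QuotientGroup.mk_mul, mk_eq_mk_iff_dvd_sub]
        have hdvd : a * b ∣ a * (a * (-w.toAdd * w'.toAdd)) :=
          mul_dvd_mul_left a (hba.mul_right _)
        convert hdvd using 1
        simp only [IsUnit.unit_spec, Units.val_mul, toAdd_mul]
        ring }
  have hrange :
      φ.range = (congruenceUnits a).map (QuotientGroup.mk' (congruenceUnits (a * b))) := by
    ext q
    constructor
    · rintro ⟨w, rfl⟩
      exact ⟨(hunit w.toAdd).unit, mem_congruenceUnits.2 (by simp), rfl⟩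
    · rintro ⟨u, hu, rfl⟩
      obtain ⟨w, hw⟩ := mem_congruenceUnits.1 hu
      refine ⟨.ofAdd w, mk_eq_mk_iff_dvd_sub.2 ?_⟩
      simp [← hw]
  have hker : φ.ker = (Ideal.span {b}).toAddSubgroup.toSubgroup := by
    ext w
    have hmem : φ w = 1 ↔ a * b ∣ a * w.toAdd := by
      rw [← QuotientGroup.mk_one]
      exact mk_eq_mk_iff_dvd_sub.trans (by simp)
    rw [MonoidHom.mem_ker, hmem, mul_dvd_mul_iff_left ha, ← Ideal.mem_span_singleton]
    rfl
  calc (congruenceUnits (a * b)).relIndex (congruenceUnits a)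
      = Nat.card φ.range := by
        rw [hrange, ← Subgroup.relIndex_ker, QuotientGroup.ker_mk']
    _ = Nat.card (O ⧸ Ideal.span {b}) := by
      rw [← Subgroup.index_ker, hker]
      rfl

variable {n : ℕ} {π : O} [IsAdicComplete (Ideal.span {π}) O]

lemma map_powMonoidHom_congruenceUnits_sq (hn : (n : O) ∣ π) :
    (congruenceUnits (π ^ 2)).map (powMonoidHom n) = congruenceUnits (π ^ 2 * n) := by
  obtain ⟨g, hg⟩ := exists_one_add_pow_eq (O := O) n
  obtain ⟨c, hc⟩ := hn
  have hpow (w : O) : (1 + π ^ 2 * w) ^ n =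
      1 + π ^ 2 * n * (w + π * (c * w ^ 2 * g.eval (π ^ 2 * w))) := by
    rw [hg]
    linear_combination π ^ 3 * w ^ 2 * g.eval (π ^ 2 * w) * hc
  ext u
  rw [Subgroup.mem_map]
  constructor
  · rintro ⟨t, ht, rfl⟩
    obtain ⟨w, hw⟩ := mem_congruenceUnits.1 ht
    rw [mem_congruenceUnits, powMonoidHom_apply, Units.val_pow_eq_pow_val, sub_eq_iff_eq_add'.1 hw,
      hpow, add_sub_cancel_left]
    exact dvd_mul_right _ _
  · intro hu
    obtain ⟨v, hv⟩ := mem_congruenceUnits.1 hu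
    obtain ⟨w, hw⟩ := exists_add_mul_eval_eq (π := π) (C c * X ^ 2 * g.comp (C (π ^ 2) * X)) v
    have ht : IsUnit (1 + π ^ 2 * w) := by
      rw [sq, mul_assoc]
      exact isUnit_one_add_mul π (π * w)
    refine ⟨ht.unit, mem_congruenceUnits.2 (by simp), Units.ext ?_⟩
    simp only [map_pow, eval_mul, eval_C, eval_pow, eval_X, eval_comp] at hw
    rw [powMonoidHom_apply, Units.val_pow_eq_pow_val, IsUnit.unit_spec, hpow, hw, ← hv]
    ring

lemma congruenceUnits_sq_inf_ker_powMonoidHom [IsDomain O] (hπ : π ≠ 0) (hn : (n : O) ∣ π) :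
    congruenceUnits (π ^ 2) ⊓ (powMonoidHom n).ker = ⊥ := by
  rw [eq_bot_iff]
  rintro t ⟨ht, htn⟩
  replace htn : (t : O) ^ n = 1 := congrArg Units.val htn
  obtain ⟨g, hg⟩ := exists_one_add_pow_eq (O := O) n
  obtain ⟨c, hc⟩ := hn
  obtain ⟨w, hw⟩ := mem_congruenceUnits.1 ht
  rw [sub_eq_iff_eq_add'] at hw
  have hfactor : π ^ 2 * n * w * (1 + π * (c * w * g.eval (π ^ 2 * w))) = 0 := by
    rw [hw, hg] at htn
    linear_combination htn - π ^ 3 * w ^ 2 * g.eval (π ^ 2 * w) * hc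
  have hn0 : (n : O) ≠ 0 := left_ne_zero_of_mul (hc ▸ hπ)
  have hw0 : w = 0 := by
    simpa [hπ, hn0, (isUnit_one_add_mul π _).ne_zero] using hfactor
  exact Subgroup.mem_bot.2 (Units.ext (by rw [hw, hw0]; simp))

lemma index_range_powMonoidHom_units [IsDomain O] (hπ : π ≠ 0) (hn : (n : O) ∣ π)
    [Finite (O ⧸ Ideal.span {π ^ 2})] :
    (powMonoidHom n : Oˣ →* Oˣ).range.index =
      Nat.card (O ⧸ Ideal.span {(n : O)}) * Nat.card (rootsOfUnity n O) := by
  have := congruenceUnits_finiteIndex (π ^ 2)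
  have hker : (powMonoidHom n : Oˣ →* Oˣ).ker = rootsOfUnity n O := by ext; simp
  have hmap := map_powMonoidHom_congruenceUnits_sq hn
  have hle : congruenceUnits (π ^ 2 * n) ≤ congruenceUnits (π ^ 2) := fun u hu ↦
    mem_congruenceUnits.2 ((dvd_mul_right _ _).trans (mem_congruenceUnits.1 hu))
  rw [index_range_eq_relIndex_mul_card_ker _ (congruenceUnits (π ^ 2)) (hmap.trans_le hle)
    (congruenceUnits_sq_inf_ker_powMonoidHom hπ hn), hmap, hker,
    relIndex_congruenceUnits_mul (pow_ne_zero 2 hπ) (hn.trans (dvd_pow_self π two_ne_zero))]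
  intro x
  rw [sq, mul_assoc]
  exact isUnit_one_add_mul π (π * x)

end Units

section AdicCompleteFinite

universe u v

variable {R : Type u} [CommRing R] (I : Ideal R)

lemma isAdicComplete_of_linearEquiv {M N : Type*} [AddCommGroup M] [Module R M] [AddCommGroup N]
    [Module R N] [IsAdicComplete I M] (e : M ≃ₗ[R] N) : IsAdicComplete I N := by
  have hcomp : ⇑(AdicCompletion.of I N) =
      AdicCompletion.congr I e ∘ AdicCompletion.of I M ∘ e.symm := by
    ext1 x
    simp [AdicCompletion.map_of]
  rw [← AdicCompletion.of_bijective_iff, hcomp]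
  exact (LinearEquiv.bijective _).comp
    ((AdicCompletion.of_bijective_iff.2 inferInstance).comp e.symm.bijective)

/- The comparison map `R̂ ⊗ M → M̂` is only available for `M` in the universe of `R`, whence the
presentation of `M` as a quotient of some `Rⁿ`. -/
lemma isAdicComplete_of_finite [IsNoetherianRing R] [IsAdicComplete I R] (M : Type v)
    [AddCommGroup M] [Module R M] [Module.Finite R M] : IsAdicComplete I M := by
  obtain ⟨n, f, hf⟩ := Module.Finite.exists_fin' R M
  let N : Type u := (Fin n → R) ⧸ LinearMap.ker f
  have hcomp : ⇑(AdicCompletion.of I N) =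
      AdicCompletion.ofTensorProduct I N ∘ (AdicCompletion.ofLinearEquiv I R).rTensor N ∘
        (TensorProduct.lid R N).symm := by
    ext1 x
    exact (one_smul (AdicCompletion I R) _).symm
  have : IsAdicComplete I N := by
    rw [← AdicCompletion.of_bijective_iff, hcomp]
    exact (AdicCompletion.ofTensorProduct_bijective_of_finite_of_isNoetherian I N).comp
      ((LinearEquiv.bijective _).comp (LinearEquiv.bijective _))
  exact isAdicComplete_of_linearEquiv I (f.quotKerEquivOfSurjective hf)

lemma isAdicComplete_map_algebraMap {S : Type*} [CommRing S] [Algebra R S] [IsAdicComplete I S] :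
    IsAdicComplete (I.map (algebraMap R S)) S where
  toIsHausdorff := IsHausdorff.map_algebraMap_iff.2 inferInstance
  toIsPrecomplete := IsPrecomplete.map_algebraMap_iff.2 inferInstance

end AdicCompleteFinite

section DiscreteValuationRing

variable {O K : Type*} [CommRing O] [IsDomain O] [IsDiscreteValuationRing O] [Field K] [Algebra O K]
  [IsFractionRing O K]

lemma nonempty_units_mulEquiv_int_prod_units : Nonempty (Multiplicative ℤ × Oˣ ≃* Kˣ) := by
  obtain ⟨ϖ, hϖ⟩ := IsDiscreteValuationRing.exists_irreducible O
  have hϖK : algebraMap O K ϖ ≠ 0 := by simpa using hϖ.ne_zero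
  let j : Multiplicative ℤ × Oˣ →* Kˣ :=
    (zpowersHom Kˣ (Units.mk0 _ hϖK)).coprod (Units.map (algebraMap O K).toMonoidHom)
  have hj (k : ℤ) (u : Oˣ) :
      (j (.ofAdd k, u) : K) = algebraMap O K ϖ ^ k * algebraMap O K u := by
    simp [j]
  have hpow (k : ℕ) (u : Oˣ) (h : ϖ ^ k * (u : O) = 1) : k = 0 := by
    by_contra hk
    exact hϖ.not_isUnit (isUnit_of_dvd_one ((dvd_pow_self ϖ hk).trans (h ▸ dvd_mul_right _ _)))
  refine ⟨MulEquiv.ofBijective j ⟨(injective_iff_map_eq_one j).2 ?_, fun x ↦ ?_⟩⟩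
  · rintro ⟨k, u⟩ h
    replace h : algebraMap O K ϖ ^ k.toAdd * algebraMap O K u = 1 :=
      (hj k.toAdd u).symm.trans (congrArg Units.val h)
    have hk : k.toAdd = 0 := by
      obtain ⟨i, hi | hi⟩ := k.toAdd.eq_nat_or_neg
      · rw [hi, zpow_natCast, ← map_pow, ← map_mul, map_eq_one_iff _ (IsFractionRing.injective O K)]
          at h
        rw [hi, hpow i u h, Nat.cast_zero]
      · rw [hi, zpow_neg, zpow_natCast, inv_mul_eq_one₀ (pow_ne_zero i hϖK), ← map_pow] at h
        rw [hi, hpow i u⁻¹ ((Units.mul_inv_eq_one).2 (IsFractionRing.injective O K h)),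
          Nat.cast_zero, neg_zero]
    rw [hk, zpow_zero, one_mul, map_eq_one_iff _ (IsFractionRing.injective O K)] at h
    exact Prod.ext (toAdd_eq_zero.1 hk) (Units.ext h)
  · obtain ⟨a, b, hb, hx⟩ := IsFractionRing.div_surjective O (x : K)
    have ha : a ≠ 0 := by
      rintro rfl
      simp [eq_comm] at hx
    obtain ⟨k, u, rfl⟩ := IsDiscreteValuationRing.eq_unit_mul_pow_irreducible ha hϖ
    obtain ⟨l, v, rfl⟩ := IsDiscreteValuationRing.eq_unit_mul_pow_irreducible
      (nonZeroDivisors.ne_zero hb) hϖ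
    refine ⟨(.ofAdd (k - l : ℤ), u / v), Units.ext ?_⟩
    have huv : algebraMap O K ↑(u / v) = algebraMap O K u / algebraMap O K v := by
      rw [eq_div_iff (by simp), ← map_mul, ← Units.val_mul, div_mul_cancel]
    rw [hj, ← hx, huv, zpow_sub₀ hϖK, zpow_natCast, zpow_natCast, map_mul, map_mul, map_pow,
      map_pow]
    ring

variable (K) in
lemma index_range_powMonoidHom_fractionRing (n : ℕ) :
    (powMonoidHom n : Kˣ →* Kˣ).range.index = n * (powMonoidHom n : Oˣ →* Oˣ).range.index := by
  obtain ⟨e⟩ := nonempty_units_mulEquiv_int_prod_units (O := O) (K := K)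
  rw [← index_range_powMonoidHom_of_mulEquiv e, index_range_powMonoidHom_prod,
    index_range_powMonoidHom_multiplicative_int]

end DiscreteValuationRing

section LocalRing

open IsLocalRing

lemma card_quotient_map_maximalIdeal (R S : Type*) [CommRing R] [IsLocalRing R] [CommRing S]
    [Algebra R S] [Module.Free R S] [Module.Finite R S] :
    Nat.card (S ⧸ (maximalIdeal R).map (algebraMap R S)) =
      Nat.card (R ⧸ maximalIdeal R) ^ Module.finrank R S := by
  let := Ideal.Quotient.field (maximalIdeal R)
  have : Module.Finite (R ⧸ maximalIdeal R) (S ⧸ (maximalIdeal R).map (algebraMap R S)) :=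
    .of_restrictScalars_finite R _ _
  rw [Module.natCard_eq_pow_finrank (K := R ⧸ maximalIdeal R), finrank_quotient_map]

end LocalRing

section Padic

variable {p : ℕ} [Fact p.Prime] {E : Type*} [Field E] [Algebra ℤ_[p] E]

variable (p E) in
lemma map_maximalIdeal_padicInt :
    (IsLocalRing.maximalIdeal ℤ_[p]).map (algebraMap ℤ_[p] (integralClosure ℤ_[p] E)) =
      Ideal.span {(p : integralClosure ℤ_[p] E)} := by
  rw [PadicInt.maximalIdeal_eq_span_p, Ideal.map_span, Set.image_singleton, map_natCast]

variable [Algebra ℚ_[p] E] [IsScalarTower ℤ_[p] ℚ_[p] E]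

variable (p E) in
lemma algebraMap_padicInt_injective : Function.Injective (algebraMap ℤ_[p] E) := by
  rw [IsScalarTower.algebraMap_eq ℤ_[p] ℚ_[p] E]
  exact (algebraMap ℚ_[p] E).injective.comp (IsFractionRing.injective ℤ_[p] ℚ_[p])

variable [FiniteDimensional ℚ_[p] E]

lemma isIntegral_of_spectralNorm_le_one {x : E} (hx : spectralNorm ℚ_[p] E x ≤ 1) :
    IsIntegral ℤ_[p] x := by
  have hmonic : (minpoly ℚ_[p] x).Monic := minpoly.monic (Algebra.IsIntegral.isIntegral x)
  rw [spectralNorm, spectralValue_le_one_iff hmonic] at hx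
  have hlifts : minpoly ℚ_[p] x ∈ lifts (algebraMap ℤ_[p] ℚ_[p]) :=
    (lifts_iff_coeff_lifts _).2 fun n ↦ ⟨⟨_, hx n⟩, rfl⟩
  obtain ⟨q, hq, -, hqmonic⟩ := lifts_and_natDegree_eq_and_monic hlifts hmonic
  refine ⟨q, hqmonic, ?_⟩
  rw [IsScalarTower.algebraMap_eq ℤ_[p] ℚ_[p] E, ← eval₂_map, hq]
  exact minpoly.aeval _ _

variable (p) in
lemma isIntegral_or_isIntegral_inv (x : E) : IsIntegral ℤ_[p] x ∨ IsIntegral ℤ_[p] x⁻¹ := by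
  rcases eq_or_ne x 0 with rfl | hx
  · exact .inl isIntegral_zero
  have hmul : spectralNorm ℚ_[p] E x * spectralNorm ℚ_[p] E x⁻¹ = 1 := by
    rw [← spectralAlgNorm_def, ← spectralAlgNorm_def, ← spectralAlgNorm_mul, mul_inv_cancel₀ hx,
      spectralAlgNorm_one]
  refine (le_or_gt (spectralNorm ℚ_[p] E x) 1).imp isIntegral_of_spectralNorm_le_one fun h ↦
    isIntegral_of_spectralNorm_le_one ?_
  nlinarith [spectralNorm_nonneg (K := ℚ_[p]) x⁻¹]

variable (p E)

lemma isDiscreteValuationRing_integralClosure :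
    IsDiscreteValuationRing (integralClosure ℤ_[p] E) := by
  have hfrac : IsFractionRing (integralClosure ℤ_[p] E) E :=
    integralClosure.isFractionRing_of_finite_extension ℚ_[p] E
  have hnoeth : IsNoetherianRing (integralClosure ℤ_[p] E) :=
    IsIntegralClosure.isNoetherianRing ℤ_[p] ℚ_[p] E _
  have hval : ValuationRing (integralClosure ℤ_[p] E) :=
    (ValuationRing.iff_isInteger_or_isInteger _ E).2 fun x ↦
      (isIntegral_or_isIntegral_inv p x).imp (fun h ↦ ⟨⟨x, h⟩, rfl⟩) fun h ↦ ⟨⟨x⁻¹, h⟩, rfl⟩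
  have hinj : Function.Injective (algebraMap ℤ_[p] (integralClosure ℤ_[p] E)) :=
    .of_comp (f := algebraMap (integralClosure ℤ_[p] E) E) (algebraMap_padicInt_injective p E)
  have hfield : ¬ IsField (integralClosure ℤ_[p] E) := fun h ↦
    IsDiscreteValuationRing.not_isField ℤ_[p] (isField_of_isIntegral_of_isField hinj h)
  exact ((IsDiscreteValuationRing.TFAE _ hfield).out 0 1).2 hval

lemma isAdicComplete_integralClosure :
    IsAdicComplete (Ideal.span {(p : integralClosure ℤ_[p] E)}) (integralClosure ℤ_[p] E) := by
  have hfin : Module.Finite ℤ_[p] (integralClosure ℤ_[p] E) :=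
    IsIntegralClosure.finite ℤ_[p] ℚ_[p] E _
  have := isAdicComplete_of_finite (IsLocalRing.maximalIdeal ℤ_[p]) (integralClosure ℤ_[p] E)
  rw [← map_maximalIdeal_padicInt p E]
  exact isAdicComplete_map_algebraMap _

lemma card_integralClosure_quotient_span_p :
    Nat.card (integralClosure ℤ_[p] E ⧸ Ideal.span {(p : integralClosure ℤ_[p] E)}) =
      p ^ Module.finrank ℚ_[p] E := by
  have : FaithfulSMul ℤ_[p] E :=
    (faithfulSMul_iff_algebraMap_injective _ _).2 (algebraMap_padicInt_injective p E)
  have : Module.Finite ℤ_[p] (integralClosure ℤ_[p] E) :=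
    IsIntegralClosure.finite ℤ_[p] ℚ_[p] E _
  have : Module.IsTorsionFree ℤ_[p] E := inferInstance
  have : Module.Free ℤ_[p] (integralClosure ℤ_[p] E) :=
    IsIntegralClosure.module_free ℤ_[p] ℚ_[p] E _
  have hrank : Module.finrank ℤ_[p] (integralClosure ℤ_[p] E) = Module.finrank ℚ_[p] E :=
    IsIntegralClosure.rank ℤ_[p] ℚ_[p] E _
  have hres : Nat.card (ℤ_[p] ⧸ IsLocalRing.maximalIdeal ℤ_[p]) = p :=
    (Nat.card_congr PadicInt.residueField.toEquiv).trans (Nat.card_zmod p)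
  rw [← map_maximalIdeal_padicInt, card_quotient_map_maximalIdeal, hres, hrank]

variable {E}

lemma index_range_powMonoidHom_of_natCast_dvd_p {n : ℕ} {ζ : E} (hζ : IsPrimitiveRoot ζ n)
    (hn : (n : integralClosure ℤ_[p] E) ∣ p) :
    (powMonoidHom n : Eˣ →* Eˣ).range.index =
      n ^ 2 * Nat.card (integralClosure ℤ_[p] E ⧸ Ideal.span {(n : integralClosure ℤ_[p] E)}) := by
  have := isDiscreteValuationRing_integralClosure p E
  have := isAdicComplete_integralClosure p E
  have : IsFractionRing (integralClosure ℤ_[p] E) E :=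
    integralClosure.isFractionRing_of_finite_extension ℚ_[p] E
  have : CharZero E := charZero_of_injective_algebraMap (algebraMap ℚ_[p] E).injective
  have hp : p ≠ 0 := (Fact.out : p.Prime).ne_zero
  have hpO : (p : integralClosure ℤ_[p] E) ≠ 0 := Nat.cast_ne_zero.2 hp
  have hn0 : n ≠ 0 := by
    rintro rfl
    exact hpO (zero_dvd_iff.1 (by simpa using hn))
  have : NeZero n := ⟨hn0⟩
  have : Finite (integralClosure ℤ_[p] E ⧸ Ideal.span {(p : integralClosure ℤ_[p] E)}) :=
    Nat.finite_of_card_ne_zero (by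
      rw [card_integralClosure_quotient_span_p]
      exact pow_ne_zero _ hp)
  have : Finite (integralClosure ℤ_[p] E ⧸ Ideal.span {(p : integralClosure ℤ_[p] E) ^ 2}) := by
    rw [← Ideal.span_singleton_pow]
    exact Ideal.finite_quotient_pow (Submodule.fg_span_singleton _) 2
  have hint : IsIntegral ℤ_[p] ζ := hζ.isIntegral (Nat.pos_of_ne_zero hn0) |>.tower_top
  have hζO : IsPrimitiveRoot (⟨ζ, hint⟩ : integralClosure ℤ_[p] E) n :=
    .of_map_of_injective (f := algebraMap (integralClosure ℤ_[p] E) E) hζ Subtype.val_injective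
  rw [index_range_powMonoidHom_fractionRing (O := integralClosure ℤ_[p] E) E,
    index_range_powMonoidHom_units hpO hn, hζO.card_rootsOfUnity]
  ring

end Padic

section PadicIndex

variable (p : ℕ) [Fact p.Prime] {E : Type*} [Field E] [Algebra ℚ_[p] E] [FiniteDimensional ℚ_[p] E]

lemma index_range_powMonoidHom_prime {ζ : E} (hζ : IsPrimitiveRoot ζ p) :
    (powMonoidHom p : Eˣ →* Eˣ).range.index = p ^ (Module.finrank ℚ_[p] E + 2) := by
  let : Algebra ℤ_[p] E := ((algebraMap ℚ_[p] E).comp (algebraMap ℤ_[p] ℚ_[p])).toAlgebra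
  have : IsScalarTower ℤ_[p] ℚ_[p] E := .of_algebraMap_eq fun _ ↦ rfl
  rw [index_range_powMonoidHom_of_natCast_dvd_p p hζ dvd_rfl, card_integralClosure_quotient_span_p]
  ring

lemma index_range_powMonoidHom_of_coprime {n : ℕ} {ζ : E} (hζ : IsPrimitiveRoot ζ n)
    (hn : n.Coprime p) : (powMonoidHom n : Eˣ →* Eˣ).range.index = n ^ 2 := by
  let : Algebra ℤ_[p] E := ((algebraMap ℚ_[p] E).comp (algebraMap ℤ_[p] ℚ_[p])).toAlgebra
  have : IsScalarTower ℤ_[p] ℚ_[p] E := .of_algebraMap_eq fun _ ↦ rfl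
  have hunit : IsUnit (n : integralClosure ℤ_[p] E) := by
    have hnorm : IsUnit (n : ℤ_[p]) := by
      rwa [PadicInt.isUnit_iff, PadicInt.norm_natCast_eq_one_iff, Nat.coprime_comm]
    simpa using hnorm.map (algebraMap ℤ_[p] (integralClosure ℤ_[p] E))
  have : Subsingleton (integralClosure ℤ_[p] E ⧸ Ideal.span {(n : integralClosure ℤ_[p] E)}) :=
    Ideal.Quotient.subsingleton_iff.2 (Ideal.span_singleton_eq_top.2 hunit)
  rw [index_range_powMonoidHom_of_natCast_dvd_p p hζ hunit.dvd, Nat.card_unique, mul_one]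

end PadicIndex

section Kummer

open IntermediateField Module

section Abstract

variable {k K : Type*} [Field k] [Field K] [Algebra k K] [FiniteDimensional k K] [IsGalois k K]
  {p : ℕ} [hp : Fact p.Prime] (hK : finrank k K = p)

include hK

lemma mem_range_algebraMap_of_fixed_of_prime {σ : Gal(K/k)} (hσ : σ ≠ 1)
    {x : K} (hx : σ x = x) : x ∈ Set.range (algebraMap k K) := by
  have htop := zpowers_eq_top_of_prime_card ((IsGalois.card_aut_eq_finrank k K).trans hK) hσ
  have hle : Subgroup.zpowers σ ≤ MulAction.stabilizer Gal(K/k) x := by simpa using hx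
  refine IntermediateField.mem_bot.1 ((IsGalois.mem_bot_iff_fixed x).2 fun τ ↦ ?_)
  exact MulAction.mem_stabilizer_iff.1 (hle (htop ▸ Subgroup.mem_top τ))

/- A generator `σ` of the Galois group multiplies `α` by a primitive `p`-th root of unity `z` and
`β` by a power `z ^ j`, so it fixes `β / α ^ j`. -/
lemma exists_eq_algebraMap_mul_pow {α β : K} {a b : k}
    (hα : α ^ p = algebraMap k K a) (hαk : α ∉ Set.range (algebraMap k K))
    (hβ : β ^ p = algebraMap k K b) :
    ∃ (c : k) (j : ℕ), β = algebraMap k K c * α ^ j := by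
  rcases eq_or_ne β 0 with rfl | hβ0
  · exact ⟨0, 0, by simp⟩
  have hα0 : α ≠ 0 := by
    rintro rfl
    exact hαk ⟨0, map_zero _⟩
  have : Nontrivial Gal(K/k) := Finite.one_lt_card_iff_nontrivial.1
    (by rw [IsGalois.card_aut_eq_finrank, hK]; exact hp.1.one_lt)
  obtain ⟨σ, hσ⟩ := exists_ne (1 : Gal(K/k))
  have hroot {x : K} {y : k} (hx : x ≠ 0) (hxy : x ^ p = algebraMap k K y) :
      (σ x / x) ^ p = 1 := by
    rw [div_pow, ← map_pow, hxy, AlgEquiv.commutes, div_self (hxy ▸ pow_ne_zero _ hx)]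
  have hz : IsPrimitiveRoot (σ α / α) p := by
    rw [← orderOf_eq_prime (hroot hα0 hα) fun h ↦
      hαk (mem_range_algebraMap_of_fixed_of_prime hK hσ ((div_eq_one_iff_eq hα0).1 h))]
    exact .orderOf _
  obtain ⟨j, -, hj⟩ := hz.eq_pow_of_pow_eq_one (hroot hβ0 hβ)
  have hfix : σ (β / α ^ j) = β / α ^ j := by
    have hσα : σ α ≠ 0 := by simpa using hα0
    rw [map_div₀, map_pow, div_eq_div_iff (pow_ne_zero j hσα) (pow_ne_zero j hα0)]
    rw [div_pow, div_eq_div_iff (pow_ne_zero j hα0) hβ0] at hj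
    rw [← hj, mul_comm]
  obtain ⟨c, hc⟩ := mem_range_algebraMap_of_fixed_of_prime hK hσ hfix
  exact ⟨c, j, by rw [hc, div_mul_cancel₀ _ (pow_ne_zero j hα0)]⟩

end Abstract

variable {k : Type*} (Ω : Type*) [Field k] [Field Ω] [Algebra k Ω] (p : ℕ)

/-- The extension of `k` inside `Ω` generated by all `p`-th roots of `a`. When `k` contains a
primitive `p`-th root of unity this is `k(ᵖ√a)`, but it involves no choice of a root. -/
def kummerField (a : k) : IntermediateField k Ω :=
  adjoin k {x : Ω | x ^ p = algebraMap k Ω a}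

variable {Ω p}

lemma mem_kummerField {a : k} {α : Ω} (hα : α ^ p = algebraMap k Ω a) : α ∈ kummerField Ω p a :=
  subset_adjoin k _ hα

variable [hp : Fact p.Prime] {ζ : k} (hζ : IsPrimitiveRoot ζ p)

lemma mk_range_powMonoidHom_eq_one_iff {a : kˣ} :
    (a : kˣ ⧸ (powMonoidHom p : kˣ →* kˣ).range) = 1 ↔ ∃ c, c ^ p = (a : k) := by
  rw [QuotientGroup.eq_one_iff]
  refine ⟨fun ⟨c, hc⟩ ↦ ⟨c, by simp [← hc]⟩, fun ⟨c, hc⟩ ↦ ⟨Units.mk0 c ?_, Units.ext hc⟩⟩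
  rintro rfl
  exact a.ne_zero (by rw [← hc, zero_pow hp.1.ne_zero])

include hζ

lemma kummerField_eq_adjoin {a : k} {α : Ω} (hα : α ^ p = algebraMap k Ω a) :
    kummerField Ω p a = k⟮α⟯ := by
  refine le_antisymm (adjoin_le_iff.2 fun x (hx : x ^ p = _) ↦ ?_)
    (adjoin_simple_le_iff.2 (mem_kummerField hα))
  rcases eq_or_ne α 0 with rfl | hα0
  · rw [← hα, zero_pow hp.1.ne_zero] at hx
    rw [eq_zero_of_pow_eq_zero hx]
    exact zero_mem _
  have hroot : (x / α) ^ p = 1 := by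
    rw [div_pow, hx, hα, div_self (hα ▸ pow_ne_zero p hα0)]
  obtain ⟨i, -, hi⟩ := (hζ.map_of_injective (algebraMap k Ω).injective).eq_pow_of_pow_eq_one hroot
  rw [← div_mul_cancel₀ x hα0, ← hi, ← map_pow]
  exact mul_mem (IntermediateField.algebraMap_mem _ _) (mem_adjoin_simple_self k α)

lemma kummerField_pow (b : k) : kummerField Ω p (b ^ p) = ⊥ := by
  rw [kummerField_eq_adjoin hζ (map_pow (algebraMap k Ω) b p).symm, adjoin_simple_eq_bot_iff]
  exact IntermediateField.algebraMap_mem ⊥ b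

variable [IsSepClosed Ω]

variable (Ω) in
lemma exists_pow_eq_algebraMap (a : k) : ∃ α : Ω, α ^ p = algebraMap k Ω a :=
  have : NeZero (p : Ω) := (hζ.map_of_injective (algebraMap k Ω).injective).neZero'
  IsSepClosed.exists_pow_nat_eq _ p

lemma finrank_kummerField_eq_iff {a : k} :
    finrank k (kummerField Ω p a) = p ↔ ∀ b, b ^ p ≠ a := by
  constructor
  · rintro h b rfl
    rw [kummerField_pow hζ, IntermediateField.finrank_bot] at h
    exact hp.1.one_lt.ne h
  · intro h
    obtain ⟨α, hα⟩ := exists_pow_eq_algebraMap Ω hζ a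
    have hmin : X ^ p - C a = minpoly k α := minpoly.eq_of_irreducible_of_monic
      (X_pow_sub_C_irreducible_of_prime hp.1 h) (by simp [hα]) (monic_X_pow_sub_C a hp.1.ne_zero)
    have hint : IsIntegral k α := ⟨X ^ p - C a, monic_X_pow_sub_C a hp.1.ne_zero, by simp [hα]⟩
    rw [kummerField_eq_adjoin hζ hα, adjoin.finrank hint, ← hmin, natDegree_X_pow_sub_C]

lemma isGalois_iff_exists_kummerField {E : IntermediateField k Ω} (hE : finrank k E = p) :
    IsGalois k E ↔ ∃ a, E = kummerField Ω p a := by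
  have : FiniteDimensional k E := .of_finrank_pos (hE ▸ hp.1.pos)
  have hroots : (primitiveRoots (finrank k E) k).Nonempty :=
    ⟨ζ, (mem_primitiveRoots (hE ▸ hp.1.pos)).2 (hE ▸ hζ)⟩
  have hcyclic : IsGalois k E → IsCyclic Gal(E/k) := fun _ ↦
    isCyclic_of_prime_card ((IsGalois.card_aut_eq_finrank k E).trans hE)
  rw [← and_iff_left_of_imp hcyclic]
  refine ((isCyclic_tfae k E hroots).out 0 2).trans ?_
  constructor
  · rintro ⟨α, ⟨a, ha⟩, hα⟩
    refine ⟨a, ?_⟩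
    have hαp : (α : Ω) ^ p = algebraMap k Ω a := by
      have := congrArg (algebraMap E Ω) ha
      rwa [hE, map_pow, ← IsScalarTower.algebraMap_apply, eq_comm] at this
    rw [kummerField_eq_adjoin hζ hαp, ← lift_adjoin_simple, hα, lift_top]
  · rintro ⟨a, rfl⟩
    obtain ⟨α, hα⟩ := exists_pow_eq_algebraMap Ω hζ a
    refine ⟨⟨α, mem_kummerField hα⟩, ⟨a, Subtype.ext ?_⟩, ?_⟩
    · rw [hE]
      exact hα.symm
    · apply lift_injective
      rw [lift_adjoin_simple, lift_top]
      exact (kummerField_eq_adjoin hζ hα).symm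

lemma isGalois_kummerField (a : k) : IsGalois k (kummerField Ω p a) := by
  by_cases h : ∀ b, b ^ p ≠ a
  · exact (isGalois_iff_exists_kummerField hζ ((finrank_kummerField_eq_iff hζ).2 h)).2 ⟨a, rfl⟩
  · push Not at h
    obtain ⟨b, rfl⟩ := h
    rw [kummerField_pow hζ]
    infer_instance

lemma kummerField_le_of_mk_mem_zpowers {a b : kˣ}
    (h : (b : kˣ ⧸ (powMonoidHom p : kˣ →* kˣ).range) ∈ Subgroup.zpowers (a : kˣ ⧸ _)) :
    kummerField Ω p (b : k) ≤ kummerField Ω p (a : k) := by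
  obtain ⟨j, hj⟩ := h
  obtain ⟨c, hc⟩ := QuotientGroup.eq.1 hj
  obtain ⟨α, hα⟩ := exists_pow_eq_algebraMap Ω hζ (a : k)
  have hb : (a : k) ^ j * (c : k) ^ p = b := by
    simpa using congrArg Units.val (eq_inv_mul_iff_mul_eq.1 hc)
  have hβ : (α ^ j * algebraMap k Ω c) ^ p = algebraMap k Ω b := by
    rw [← hb, mul_pow, ← zpow_natCast, zpow_comm, zpow_natCast, hα]
    simp
  rw [kummerField_eq_adjoin hζ hβ, adjoin_simple_le_iff]
  exact mul_mem (zpow_mem (mem_kummerField hα) j) (IntermediateField.algebraMap_mem _ _)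

lemma exists_eq_pow_mul_pow_of_kummerField_le {a b : k} (ha : ∀ c, c ^ p ≠ a)
    (h : kummerField Ω p b ≤ kummerField Ω p a) : ∃ c j, b = c ^ p * a ^ j := by
  have hfin : finrank k (kummerField Ω p a) = p := (finrank_kummerField_eq_iff hζ).2 ha
  have : FiniteDimensional k (kummerField Ω p a) := .of_finrank_pos (by rw [hfin]; exact hp.1.pos)
  have := isGalois_kummerField (Ω := Ω) hζ a
  obtain ⟨α, hα⟩ := exists_pow_eq_algebraMap Ω hζ a
  obtain ⟨β, hβ⟩ := exists_pow_eq_algebraMap Ω hζ b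
  obtain ⟨c, j, hc⟩ := exists_eq_algebraMap_mul_pow (K := kummerField Ω p a)
    (α := ⟨α, mem_kummerField hα⟩) (β := ⟨β, h (mem_kummerField hβ)⟩) (a := a) (b := b)
    hfin (Subtype.ext hα)
    (fun ⟨d, hd⟩ ↦ ha d ((algebraMap k Ω).injective (by
      rw [map_pow, ← hα]
      exact congrArg (· ^ p) (congrArg Subtype.val hd))))
    (Subtype.ext hβ)
  refine ⟨c, j, (algebraMap k Ω).injective ?_⟩
  rw [← hβ, map_mul, map_pow, map_pow, ← hα, ← pow_mul, mul_comm p, pow_mul, ← mul_pow]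
  exact congrArg (· ^ p) (congrArg Subtype.val hc)

lemma kummerField_eq_iff_mk_mem_zpowers {a b : kˣ} (ha : ∀ c, c ^ p ≠ (a : k))
    (hb : ∀ c, c ^ p ≠ (b : k)) :
    kummerField Ω p (b : k) = kummerField Ω p (a : k) ↔
      (b : kˣ ⧸ (powMonoidHom p : kˣ →* kˣ).range) ∈ Subgroup.zpowers (a : kˣ ⧸ _) := by
  have hfin {a : k} (h : ∀ b, b ^ p ≠ a) := (finrank_kummerField_eq_iff (Ω := Ω) hζ).2 h
  have : FiniteDimensional k (kummerField Ω p (a : k)) :=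
    .of_finrank_pos (by rw [hfin ha]; exact hp.1.pos)
  refine ⟨fun h ↦ ?_, fun h ↦ eq_of_le_of_finrank_eq (kummerField_le_of_mk_mem_zpowers hζ h)
    ((hfin hb).trans (hfin ha).symm)⟩
  obtain ⟨c, j, hc⟩ := exists_eq_pow_mul_pow_of_kummerField_le hζ ha h.le
  have hc0 : c ≠ 0 := by
    rintro rfl
    exact b.ne_zero (by rw [hc, zero_pow hp.1.ne_zero, zero_mul])
  refine ⟨j, QuotientGroup.eq.2 ⟨Units.mk0 c hc0, ?_⟩⟩
  rw [eq_inv_mul_iff_mul_eq]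
  ext
  simp [hc, mul_comm]

lemma exists_mk_eq_and_kummerField_eq_iff {a : kˣ} (ha : ∀ c, c ^ p ≠ (a : k))
    {x : kˣ ⧸ (powMonoidHom p : kˣ →* kˣ).range} (hx : x ≠ 1) :
    (∃ b : kˣ, (b : kˣ ⧸ _) = x ∧ kummerField Ω p (a : k) = kummerField Ω p (b : k)) ↔
      x ∈ Subgroup.zpowers (a : kˣ ⧸ (powMonoidHom p : kˣ →* kˣ).range) := by
  obtain ⟨b, rfl⟩ := QuotientGroup.mk_surjective x
  have hone {c : kˣ} (hc : (c : kˣ ⧸ (powMonoidHom p : kˣ →* kˣ).range) ≠ 1) :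
      ∀ d, d ^ p ≠ (c : k) := not_exists.1 fun h ↦ hc (mk_range_powMonoidHom_eq_one_iff.2 h)
  constructor
  · rintro ⟨c, hc, h⟩
    rw [← hc] at hx ⊢
    exact (kummerField_eq_iff_mk_mem_zpowers hζ ha (hone hx)).1 h.symm
  · exact fun h ↦ ⟨b, rfl, ((kummerField_eq_iff_mk_mem_zpowers hζ ha (hone hx)).2 h).symm⟩

lemma relIndex_sub_one_eq_mul_card_kummerField (A : Subgroup kˣ) :
    (powMonoidHom p : kˣ →* kˣ).range.relIndex A - 1 =
      (p - 1) * Nat.card {E : IntermediateField k Ω //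
        finrank k E = p ∧ ∃ a ∈ A, E = kummerField Ω p (a : k)} := by
  let mk := QuotientGroup.mk' (powMonoidHom p : kˣ →* kˣ).range
  have hone (a : kˣ) : mk a ≠ 1 ↔ ∀ c, c ^ p ≠ (a : k) := by
    rw [← not_exists]
    exact (mk_range_powMonoidHom_eq_one_iff (p := p)).not
  have hrel : (powMonoidHom p : kˣ →* kˣ).range.relIndex A = Nat.card (A.map mk) := by
    rw [← Subgroup.relIndex_ker, QuotientGroup.ker_mk']
  rw [hrel, ← card_mem_and_ne_one]
  refine card_eq_mul_card_of_existsUnique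
    (fun x E ↦ ∃ a, mk a = x.1 ∧ E.1 = kummerField Ω p (a : k)) (Nat.sub_ne_zero_of_lt hp.1.one_lt)
    ?_ ?_
  · rintro ⟨_, ⟨a, ha, rfl⟩, ha1⟩
    rw [hone] at ha1
    refine ⟨⟨_, (finrank_kummerField_eq_iff hζ).2 ha1, a, ha, rfl⟩, ⟨a, rfl, rfl⟩, ?_⟩
    rintro ⟨_, -⟩ ⟨b, hba : mk b = mk a, rfl⟩
    have hb' : ∀ c, c ^ p ≠ (b : k) := (hone b).1 (hba ▸ (hone a).2 ha1)
    exact Subtype.ext ((kummerField_eq_iff_mk_mem_zpowers hζ ha1 hb').2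
      (show mk b ∈ Subgroup.zpowers (mk a) by rw [hba]; exact Subgroup.mem_zpowers _))
  · rintro ⟨_, ha, a, haA, rfl⟩
    rw [finrank_kummerField_eq_iff hζ] at ha
    have horder : orderOf (mk a) = p := orderOf_eq_prime
      (by rw [← map_pow]; exact (QuotientGroup.eq_one_iff _).2 ⟨a, rfl⟩) ((hone a).2 ha)
    have hzpowers : Subgroup.zpowers (mk a) ≤ A.map mk := by
      simpa using Subgroup.mem_map_of_mem mk haA
    have hcard_zpowers : Nat.card {x // x ∈ Subgroup.zpowers (mk a) ∧ x ≠ 1} = p - 1 := by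
      rw [card_mem_and_ne_one, Nat.card_zpowers, horder]
    rw [← hcard_zpowers]
    refine Nat.card_congr ((Equiv.subtypeSubtypeEquivSubtypeInter _ fun x ↦
      ∃ b, mk b = x ∧ kummerField Ω p (a : k) = kummerField Ω p (b : k)).trans
        (Equiv.subtypeEquivRight fun x ↦ ⟨?_, ?_⟩))
    · rintro ⟨⟨-, hx⟩, hb⟩
      exact ⟨(exists_mk_eq_and_kummerField_eq_iff hζ ha hx).1 hb, hx⟩
    · rintro ⟨hxa, hx⟩
      exact ⟨⟨hzpowers hxa, hx⟩, (exists_mk_eq_and_kummerField_eq_iff hζ ha hx).2 hxa⟩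

lemma index_sub_one_eq_mul_card_isGalois :
    (powMonoidHom p : kˣ →* kˣ).range.index - 1 =
      (p - 1) * Nat.card {E : IntermediateField k Ω // finrank k E = p ∧ IsGalois k E} := by
  rw [← Subgroup.relIndex_top_right, relIndex_sub_one_eq_mul_card_kummerField (Ω := Ω) hζ]
  refine congrArg _ (Nat.card_congr (Equiv.subtypeEquivRight fun E ↦ and_congr_right fun hE ↦ ?_))
  rw [isGalois_iff_exists_kummerField hζ hE]
  refine ⟨fun ⟨a, _, ha⟩ ↦ ⟨a, ha⟩, fun ⟨a, ha⟩ ↦ ?_⟩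
  have ha0 : a ≠ 0 := by
    rintro rfl
    exact (finrank_kummerField_eq_iff hζ).1 (ha ▸ hE) 0 (zero_pow hp.1.ne_zero)
  exact ⟨Units.mk0 a ha0, Subgroup.mem_top _, ha⟩

end Kummer

section Groups

variable {G : Type*} [Group G]

lemma card_orderOf_eq_prime (p : ℕ) [hp : Fact p.Prime] :
    Nat.card {g : G // orderOf g = p} = (p - 1) * Nat.card {H : Subgroup G // Nat.card H = p} := by
  refine card_eq_mul_card_of_existsUnique (fun g H ↦ g.1 ∈ H.1)
    (Nat.sub_ne_zero_of_lt hp.out.one_lt) ?_ ?_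
  · rintro ⟨g, hg⟩
    refine ⟨⟨Subgroup.zpowers g, (Nat.card_zpowers g).trans hg⟩, Subgroup.mem_zpowers g, ?_⟩
    rintro ⟨H, hH⟩ hgH
    have : Finite H := Nat.finite_of_card_ne_zero (hH ▸ hp.out.ne_zero)
    exact Subtype.ext (Subgroup.eq_of_le_of_card_ge (Subgroup.zpowers_le.2 hgH)
      (by rw [hH, Nat.card_zpowers, hg])).symm
  · rintro ⟨H, hH⟩
    have horder (g : G) : orderOf g = p ∧ g ∈ H ↔ g ∈ H ∧ g ≠ 1 := by
      refine ⟨fun ⟨hg, hgH⟩ ↦ ⟨hgH, ?_⟩, fun ⟨hgH, hg⟩ ↦ ⟨orderOf_eq_prime ?_ hg, hgH⟩⟩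
      · rintro rfl
        exact hp.out.ne_one (hg.symm.trans orderOf_one)
      · exact orderOf_dvd_iff_pow_eq_one.1 (hH ▸ H.orderOf_dvd_natCard hgH)
    rw [Nat.card_congr (Equiv.subtypeSubtypeEquivSubtypeInter _ (· ∈ H)),
      Nat.card_congr (Equiv.subtypeEquivRight horder), card_mem_and_ne_one, hH]

lemma le_center_of_normal_of_card_eq_two (H : Subgroup G) [hn : H.Normal] (hH : Nat.card H = 2) :
    H ≤ Subgroup.center G := by
  intro x hx
  rw [Subgroup.mem_center_iff]
  intro g
  rcases eq_or_ne x 1 with rfl | hx1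
  · rw [mul_one, one_mul]
  have hunique := ((Nat.card_eq_two_iff' (1 : H)).1 hH).unique
    (y₁ := ⟨g * x * g⁻¹, hn.conj_mem x hx g⟩) (y₂ := ⟨x, hx⟩)
    (by rwa [ne_eq, Subtype.ext_iff, OneMemClass.coe_one, conj_eq_one_iff])
    (by rwa [ne_eq, Subtype.ext_iff])
  exact mul_inv_eq_iff_eq_mul.1 (congrArg Subtype.val hunique)

lemma normal_of_le_of_disjoint {P Q : Subgroup G} [hP : P.Normal] [hQ : Q.Normal]
    [IsMulCommutative Q] (hPQ : Disjoint P Q) (htop : P ⊔ Q = ⊤) {H : Subgroup G} (hH : H ≤ Q) :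
    H.Normal := by
  have hcentralizer : P ⊔ Q ≤ Subgroup.centralizer (Q : Set G) :=
    sup_le (fun x hx ↦ Subgroup.mem_centralizer_iff.2 fun y hy ↦
      (Subgroup.commute_of_normal_of_disjoint P Q hP hQ hPQ x y hx hy).eq.symm) Q.le_centralizer
  rw [← Subgroup.normalizer_eq_top_iff, eq_top_iff, ← htop]
  exact hcentralizer.trans
    ((Subgroup.centralizer_le hH).trans (Subgroup.centralizer_le_normalizer _))

lemma toPermHom_quotient_injective_of_card_prime {P : Subgroup G} (hP : (Nat.card P).Prime)
    (hn : ¬ P.Normal) : Function.Injective (MulAction.toPermHom G (G ⧸ P)) := by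
  have : Finite P := Nat.finite_of_card_ne_zero hP.ne_zero
  rw [← MonoidHom.ker_eq_bot_iff, ← Subgroup.normalCore_eq_ker]
  rcases (Nat.dvd_prime hP).1 (Subgroup.card_dvd_of_le P.normalCore_le) with h | h
  · exact Subgroup.card_eq_one.1 h
  · refine absurd ?_ hn
    rw [← Subgroup.eq_of_le_of_card_ge P.normalCore_le h.ge]
    infer_instance

lemma nonempty_mulEquiv_alternatingGroup_of_injective {α β : Type*} [Fintype α] [DecidableEq α]
    (f : G →* Equiv.Perm β) (hf : Function.Injective f) (e : β ≃ α)
    (hcard : 2 * Nat.card G = (Nat.card α).factorial) : Nonempty (G ≃* alternatingGroup α) := by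
  let g : G →* Equiv.Perm α := (e.permCongrHom : Equiv.Perm β →* Equiv.Perm α).comp f
  have hg : Function.Injective g := e.permCongrHom.injective.comp hf
  have hrange : g.range = alternatingGroup α := by
    apply Equiv.Perm.eq_alternatingGroup_of_index_eq_two
    have hmul := g.range.card_mul_index
    rw [Nat.card_perm, ← hcard, ← Nat.card_congr (MonoidHom.ofInjective hg).toEquiv,
      mul_comm 2] at hmul
    refine Nat.eq_of_mul_eq_mul_left (Nat.pos_of_ne_zero fun h ↦ ?_) hmul
    rw [h] at hcard
    exact (Nat.factorial_pos _).ne hcard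
  exact ⟨(MonoidHom.ofInjective hg).trans (MulEquiv.subgroupCongr hrange)⟩

/- If a subgroup `P` of order three were normal, then `G = P × V` and every subgroup of the abelian
group `V` would be normal, so `G` embeds in the permutations of `G ⧸ P`. -/
lemma nonempty_mulEquiv_alternatingGroup_of_card_eq_twelve (hG : Nat.card G = 12) {V H : Subgroup G}
    [V.Normal] (hV : Nat.card V = 4) (hHV : H ≤ V) (hH : ¬ H.Normal) :
    Nonempty (G ≃* alternatingGroup (Fin 4)) := by
  have : Finite G := Nat.finite_of_card_ne_zero (by rw [hG]; norm_num)
  have : Fact (Nat.Prime 2) := ⟨Nat.prime_two⟩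
  have : Fact (Nat.Prime 3) := ⟨Nat.prime_three⟩
  obtain ⟨P, hP⟩ := Sylow.exists_subgroup_card_pow_prime (G := G) 3 (n := 1) (by rw [hG]; norm_num)
  rw [pow_one] at hP
  have hPn : ¬ P.Normal := fun _ ↦ by
    have hcompl : P.IsComplement' V :=
      Subgroup.isComplement'_of_coprime (by rw [hP, hV, hG]) (by rw [hP, hV]; norm_num)
    have : IsMulCommutative V := IsPGroup.isMulCommutative_of_card_eq_prime_sq (p := 2) hV
    exact hH (normal_of_le_of_disjoint hcompl.disjoint hcompl.sup_eq_top hHV)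
  have hindex : P.index = 4 := by
    have := P.card_mul_index
    rw [hP, hG] at this
    omega
  exact nonempty_mulEquiv_alternatingGroup_of_injective (MulAction.toPermHom G (G ⧸ P))
    (toPermHom_quotient_injective_of_card_prime (hP ▸ Nat.prime_three) hPn)
    (Nat.equivFinOfCardPos (hindex.trans_ne four_ne_zero) |>.trans (finCongr hindex))
    (by rw [hG, Nat.card_fin]; rfl)

end Groups

section AlternatingGroup

variable {α : Type*} [Fintype α] [DecidableEq α]

lemma alternatingGroup_index_ne_two (H : Subgroup (alternatingGroup α)) : H.index ≠ 2 := by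
  intro hH
  have hthree : {g : alternatingGroup α | (g : Equiv.Perm α).IsThreeCycle} ⊆ H := by
    intro g hg
    have horder : orderOf g = 3 := (Subgroup.orderOf_coe g).symm.trans hg.orderOf
    have hsq : (g ^ 2) ^ 2 = g := by
      rw [← pow_mul, pow_succ, ← horder, pow_orderOf_eq_one, one_mul]
    exact hsq ▸ Subgroup.sq_mem_of_index_two hH _
  have htop : H = ⊤ := by
    rw [eq_top_iff, ← alternatingGroup.closure_isThreeCycles_eq_top, Subgroup.closure_le]
    exact hthree
  rw [htop, Subgroup.index_top] at hH
  exact absurd hH (by norm_num)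

variable (hα : Nat.card α = 4)
include hα

lemma card_mul_index_alternatingGroup (H : Subgroup (alternatingGroup α)) :
    Nat.card H * H.index = 12 := by
  rw [H.card_mul_index, alternatingGroup.card_of_card_eq_four hα]

lemma le_kleinFour_of_isPGroup {H : Subgroup (alternatingGroup α)} (hH : IsPGroup 2 H) :
    H ≤ alternatingGroup.kleinFour α := by
  obtain ⟨S, hS⟩ := hH.exists_le_sylow
  rwa [alternatingGroup.two_sylow_eq_kleinFour_of_card_eq_four hα S] at hS

lemma le_kleinFour_of_index_eq_six {H : Subgroup (alternatingGroup α)} (hH : H.index = 6) :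
    H ≤ alternatingGroup.kleinFour α := by
  have hmul := card_mul_index_alternatingGroup hα H
  rw [hH] at hmul
  exact le_kleinFour_of_isPGroup hα (IsPGroup.of_card (n := 1) (by omega))

lemma index_kleinFour : (alternatingGroup.kleinFour α).index = 3 := by
  have hmul := card_mul_index_alternatingGroup hα (alternatingGroup.kleinFour α)
  rw [alternatingGroup.kleinFour_card_of_card_eq_four hα] at hmul
  omega

lemma index_eq_three_iff_eq_kleinFour {H : Subgroup (alternatingGroup α)} :
    H.index = 3 ↔ H = alternatingGroup.kleinFour α := by
  refine ⟨fun hH ↦ ?_, fun hH ↦ hH ▸ index_kleinFour hα⟩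
  have hmul := card_mul_index_alternatingGroup hα H
  have hcard : Nat.card H = 2 ^ 2 := by rw [hH] at hmul; omega
  exact Subgroup.eq_of_le_of_card_ge (le_kleinFour_of_isPGroup hα (IsPGroup.of_card hcard))
    (by rw [hcard, alternatingGroup.kleinFour_card_of_card_eq_four hα]; norm_num)

lemma orderOf_eq_two_iff_mem_kleinFour {g : alternatingGroup α} :
    orderOf g = 2 ↔ g ∈ alternatingGroup.kleinFour α ∧ g ≠ 1 := by
  have : Fact (Nat.Prime 2) := ⟨Nat.prime_two⟩
  constructor
  · intro hg
    have hcard : Nat.card (Subgroup.zpowers g) = 2 ^ 1 := (Nat.card_zpowers g).trans hg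
    refine ⟨le_kleinFour_of_isPGroup hα (IsPGroup.of_card hcard) (Subgroup.mem_zpowers g), ?_⟩
    rintro rfl
    simp at hg
  · rintro ⟨hg, hg1⟩
    have hpow := Monoid.pow_exponent_eq_one (⟨g, hg⟩ : alternatingGroup.kleinFour α)
    rw [alternatingGroup.exponent_kleinFour_of_card_eq_four hα] at hpow
    exact orderOf_eq_prime (congrArg Subtype.val hpow) hg1

lemma card_subgroup_alternatingGroup_index_eq_six :
    Nat.card {H : Subgroup (alternatingGroup α) // H.index = 6} = 3 := by
  have : Fact (Nat.Prime 2) := ⟨Nat.prime_two⟩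
  have hindex (H : Subgroup (alternatingGroup α)) : H.index = 6 ↔ Nat.card H = 2 := by
    have hmul := card_mul_index_alternatingGroup hα H
    constructor <;> intro hH <;> rw [hH] at hmul <;> omega
  have horder := card_orderOf_eq_prime (G := alternatingGroup α) 2
  rw [Nat.card_congr (Equiv.subtypeEquivRight fun _ ↦ orderOf_eq_two_iff_mem_kleinFour hα),
    card_mem_and_ne_one, alternatingGroup.kleinFour_card_of_card_eq_four hα] at horder
  rw [Nat.card_congr (Equiv.subtypeEquivRight hindex)]
  omega

lemma not_normal_of_index_eq_six {H : Subgroup (alternatingGroup α)} (hH : H.index = 6) :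
    ¬ H.Normal := by
  intro _
  have hmul := card_mul_index_alternatingGroup hα H
  have hcard : Nat.card H = 2 := by rw [hH] at hmul; omega
  have hbot := le_center_of_normal_of_card_eq_two H hcard
  rw [alternatingGroup.center_eq_bot hα.ge, le_bot_iff] at hbot
  rw [hbot, Subgroup.card_bot] at hcard
  exact absurd hcard (by norm_num)

end AlternatingGroup

section GaloisGroup

open IntermediateField Module

variable {F Ω G : Type*} [Field F] [Field Ω] [Algebra F Ω] [Group G]

/-- `IsGaloisWithGroup G K` says that `K / F` is a finite Galois extension whose Galois group is
isomorphic to `G`; these are the extensions counted by `nu F G`. -/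
def IsGaloisWithGroup (G : Type*) [Group G] (K : IntermediateField F Ω) : Prop :=
  FiniteDimensional F K ∧ IsGalois F K ∧ Nonempty ((K ≃ₐ[F] K) ≃* G)

lemma IsGaloisWithGroup.finrank_eq_card {K : IntermediateField F Ω} (hK : IsGaloisWithGroup G K) :
    finrank F K = Nat.card G := by
  obtain ⟨_, _, ⟨e⟩⟩ := hK
  rw [← IsGalois.card_aut_eq_finrank, Nat.card_congr e.toEquiv]

/-- The subfields of `K`, as subfields of `Ω` contained in `K`, are the intermediate fields of
`K / F`. -/
def iicOrderIso (K : IntermediateField F Ω) : Set.Iic K ≃o IntermediateField F K where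
  toFun E := restrict E.2
  invFun E := ⟨lift E, lift_le E⟩
  left_inv E := Subtype.ext (lift_restrict E.2)
  right_inv E := lift_injective K (lift_restrict (lift_le E))
  map_rel_iff' {E E'} :=
    ⟨fun h x hx ↦ (mem_restrict E'.2 ⟨x, E.2 hx⟩).1 (h ((mem_restrict E.2 ⟨x, E.2 hx⟩).2 hx)),
      fun h x hx ↦ (mem_restrict E'.2 x).2 (h ((mem_restrict E.2 x).1 hx))⟩

lemma IsGaloisWithGroup.exists_orderIso {K : IntermediateField F Ω} (hK : IsGaloisWithGroup G K) :
    ∃ Φ : Set.Iic K ≃o (Subgroup G)ᵒᵈ,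
      (∀ E : Set.Iic K, (OrderDual.ofDual (Φ E)).index = finrank F (E : IntermediateField F Ω)) ∧
      ∀ E : Set.Iic K, (OrderDual.ofDual (Φ E)).Normal ↔
        IsGalois F (E : IntermediateField F Ω) := by
  obtain ⟨_, _, ⟨e⟩⟩ := hK
  refine ⟨(iicOrderIso K).trans (IsGalois.intermediateFieldEquivSubgroup.trans e.mapSubgroup.dual),
    fun E ↦ ?_, fun E ↦ ?_⟩
  · calc ((restrict E.2).fixingSubgroup.map (e : _ →* G)).index
        = finrank F (restrict E.2) := by
          rw [Subgroup.index_map_equiv, finrank_eq_fixingSubgroup_index]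
      _ = finrank F (E : IntermediateField F Ω) :=
          (restrictAlgEquiv E.2).toLinearEquiv.finrank_eq.symm
  · calc ((restrict E.2).fixingSubgroup.map (e : _ →* G)).Normal
        ↔ (restrict E.2).fixingSubgroup.Normal := by
          refine ⟨fun h ↦ ?_, fun h ↦ h.map _ e.surjective⟩
          rw [← Subgroup.comap_map_eq_self_of_injective (f := (e : _ →* G)) e.injective
            (restrict E.2).fixingSubgroup]
          exact h.comap _
      _ ↔ IsGalois F (restrict E.2) := InfiniteGalois.normal_iff_isGalois _
      _ ↔ IsGalois F (E : IntermediateField F Ω) :=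
          (AlgEquiv.transfer_galois (restrictAlgEquiv E.2)).symm

end GaloisGroup

section A4Extension

open IntermediateField Module

variable {F Ω : Type*} [Field F] [Field Ω] [Algebra F Ω] {K : IntermediateField F Ω}

lemma isGaloisWithGroup_alternatingGroup {L E : IntermediateField F Ω} (hK12 : finrank F K = 12)
    [IsGalois F K] (hLE : L ≤ E) (hEK : E ≤ K) [hL : IsGalois F L] (hL3 : finrank F L = 3)
    (hE : ¬ IsGalois F E) : IsGaloisWithGroup (alternatingGroup (Fin 4)) K := by
  have hfin : FiniteDimensional F K := .of_finrank_pos (by rw [hK12]; norm_num)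
  have hK : IsGaloisWithGroup (K ≃ₐ[F] K) K := ⟨hfin, ‹_›, ⟨MulEquiv.refl _⟩⟩
  have hcard : Nat.card (K ≃ₐ[F] K) = 12 := hK.finrank_eq_card.symm.trans hK12
  obtain ⟨Φ, hindex, hnormal⟩ := hK.exists_orderIso
  let V : Subgroup (K ≃ₐ[F] K) := OrderDual.ofDual (Φ ⟨L, hLE.trans hEK⟩)
  have hV : V.Normal := (hnormal _).2 hL
  have hVcard : Nat.card V = 4 := by
    have hmul := V.card_mul_index
    rw [hindex, hL3, hcard] at hmul
    omega
  have hle : OrderDual.ofDual (Φ ⟨E, hEK⟩) ≤ V := Φ.le_iff_le.2 hLE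
  exact ⟨hfin, ‹_›, nonempty_mulEquiv_alternatingGroup_of_card_eq_twelve hcard hVcard hle
    (mt (hnormal _).1 hE)⟩

variable (hK : IsGaloisWithGroup (alternatingGroup (Fin 4)) K)
include hK

lemma finrank_eq_twelve : finrank F K = 12 := by
  rw [hK.finrank_eq_card, alternatingGroup.card_of_card_eq_four (Nat.card_fin 4)]

lemma finrank_ne_two_of_le {E : IntermediateField F Ω} (hE : E ≤ K) : finrank F E ≠ 2 := by
  obtain ⟨Φ, hindex, -⟩ := hK.exists_orderIso
  exact hindex ⟨E, hE⟩ ▸ alternatingGroup_index_ne_two _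

lemma not_isGalois_of_finrank_eq_six {E : IntermediateField F Ω} (hE : E ≤ K)
    (hE6 : finrank F E = 6) : ¬ IsGalois F E := by
  obtain ⟨Φ, hindex, hnormal⟩ := hK.exists_orderIso
  rw [← hnormal ⟨E, hE⟩]
  exact not_normal_of_index_eq_six (Nat.card_fin 4) ((hindex _).trans hE6)

lemma card_finrank_eq_six :
    Nat.card {E : IntermediateField F Ω // E ≤ K ∧ finrank F E = 6} = 3 := by
  obtain ⟨Φ, hindex, -⟩ := hK.exists_orderIso
  rw [← card_subgroup_alternatingGroup_index_eq_six (Nat.card_fin 4),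
    ← Nat.card_congr (Equiv.subtypeSubtypeEquivSubtypeInter (· ≤ K) (finrank F · = 6))]
  exact Nat.card_congr ((Φ.toEquiv.trans OrderDual.ofDual).subtypeEquiv fun E ↦
    Eq.congr_left (hindex E).symm)

lemma exists_cubic_le : ∃ L ≤ K, IsGalois F L ∧ finrank F L = 3 ∧
    (∀ L' ≤ K, finrank F L' = 3 → L' = L) ∧ ∀ E ≤ K, finrank F E = 6 → L ≤ E := by
  obtain ⟨Φ, hindex, hnormal⟩ := hK.exists_orderIso
  obtain ⟨L, hL⟩ := Φ.surjective (OrderDual.toDual (alternatingGroup.kleinFour (Fin 4)))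
  refine ⟨L, L.2, ?_, ?_, fun L' hL' hL'3 ↦ ?_, fun E hE hE6 ↦ ?_⟩
  · rw [← hnormal, hL]
    exact alternatingGroup.normal_kleinFour (Nat.card_fin 4)
  · rw [← hindex, hL]
    exact index_kleinFour (Nat.card_fin 4)
  · have hV := (index_eq_three_iff_eq_kleinFour (Nat.card_fin 4)).1
      ((hindex ⟨L', hL'⟩).trans hL'3)
    have hΦ : Φ ⟨L', hL'⟩ = Φ L := hL ▸ hV
    exact congrArg Subtype.val (Φ.injective hΦ)
  · have hV := le_kleinFour_of_index_eq_six (Nat.card_fin 4) ((hindex ⟨E, hE⟩).trans hE6)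
    have hΦ : Φ L ≤ Φ ⟨E, hE⟩ := hL ▸ hV
    exact Φ.le_iff_le.1 hΦ

lemma normalClosure_eq_of_finrank_eq_six [IsGalois F Ω] {E : IntermediateField F Ω} (hE : E ≤ K)
    (hE6 : finrank F E = 6) : normalClosure F E Ω = K := by
  have hnot := not_isGalois_of_finrank_eq_six hK hE hE6
  have hK12 := finrank_eq_twelve hK
  obtain ⟨_, _, -⟩ := hK
  have hle : normalClosure F E Ω ≤ K := normalClosure_le_iff_of_normal.2 hE
  have hEle : E ≤ normalClosure F E Ω := le_normalClosure E
  have hne : finrank F (normalClosure F E Ω) ≠ 6 := fun h ↦ by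
    have : FiniteDimensional F (normalClosure F E Ω) := .of_finrank_pos (by rw [h]; norm_num)
    refine hnot ?_
    rw [IntermediateField.eq_of_le_of_finrank_eq hEle (hE6.trans h.symm)]
    infer_instance
  have hdvd := finrank_dvd_of_le_right hle
  have hdvd6 := finrank_dvd_of_le_right hEle
  refine IntermediateField.eq_of_le_of_finrank_eq hle ?_
  rw [hK12] at hdvd ⊢
  rw [hE6] at hdvd6
  have hpos := ne_zero_of_dvd_ne_zero (by norm_num) hdvd
  have hle12 := Nat.le_of_dvd (by norm_num) hdvd
  omega

end A4Extension

section KummerTower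

open IntermediateField Module

variable {F L Ω : Type*} [Field F] [Field L] [Field Ω] [Algebra F L] [Algebra L Ω]

lemma finrank_sup_eq_four {E E' : IntermediateField L Ω} (hE : finrank L E = 2)
    (hE' : finrank L E' = 2) (hne : E ≠ E') : finrank L (E ⊔ E' : IntermediateField L Ω) = 4 := by
  have : FiniteDimensional L E := .of_finrank_pos (by rw [hE]; norm_num)
  have : FiniteDimensional L E' := .of_finrank_pos (by rw [hE']; norm_num)
  have hle := finrank_sup_le E E'
  have hdvd := finrank_dvd_of_le_right (le_sup_left : E ≤ E ⊔ E')
  have hpos : 0 < finrank L (E ⊔ E' : IntermediateField L Ω) := finrank_pos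
  have hne2 : finrank L (E ⊔ E' : IntermediateField L Ω) ≠ 2 := fun h ↦ hne <|
    (eq_of_le_of_finrank_eq le_sup_left (hE.trans h.symm)).trans
      (eq_of_le_of_finrank_eq le_sup_right (hE'.trans h.symm)).symm
  rw [hE] at hle hdvd
  rw [hE'] at hle
  omega

section Norm

variable [Algebra F Ω] [IsScalarTower F L Ω]

lemma map_restrictScalars_kummerField {φ : Ω ≃ₐ[F] Ω} {σ : L ≃ₐ[F] L}
    (hφ : ∀ x, φ (algebraMap L Ω x) = algebraMap L Ω (σ x)) (n : ℕ) (a : L) :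
    ((kummerField Ω n a).restrictScalars F).map (φ : Ω →ₐ[F] Ω) =
      (kummerField Ω n (σ a)).restrictScalars F := by
  have hle {φ : Ω ≃ₐ[F] Ω} {σ : L ≃ₐ[F] L}
      (hφ : ∀ x, φ (algebraMap L Ω x) = algebraMap L Ω (σ x)) (a : L) :
      ∀ x ∈ kummerField Ω n a, φ x ∈ kummerField Ω n (σ a) := by
    intro x hx
    induction hx using adjoin_induction with
    | mem α hα => exact mem_kummerField ((map_pow φ α n).symm.trans (hα ▸ hφ a))
    | algebraMap x => exact hφ x ▸ IntermediateField.algebraMap_mem _ _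
    | add x y _ _ hx hy => exact map_add φ x y ▸ add_mem hx hy
    | inv x _ hx => exact map_inv₀ φ x ▸ inv_mem hx
    | mul x y _ _ hx hy => exact map_mul φ x y ▸ mul_mem hx hy
  have hsymm (x : L) : φ.symm (algebraMap L Ω x) = algebraMap L Ω (σ.symm x) := by
    rw [AlgEquiv.symm_apply_eq, hφ, AlgEquiv.apply_symm_apply]
  refine le_antisymm ?_ fun y hy ↦ ⟨φ.symm y, ?_, φ.apply_symm_apply y⟩
  · rintro _ ⟨x, hx, rfl⟩
    exact hle hφ a x hx
  · have := hle hsymm (σ a) y hy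
    rwa [σ.symm_apply_apply] at this

/- The root is `∏ σ̃ α`, for extensions `σ̃` to `Ω` of the automorphisms `σ` of `L`. -/
lemma exists_mem_pow_eq_norm [FiniteDimensional F L] [IsGalois F L] [Normal F Ω]
    (K : IntermediateField F Ω) [Normal F K] {n : ℕ} {a : L} {α : Ω} (hα : α ∈ K)
    (hαn : α ^ n = algebraMap L Ω a) : ∃ β ∈ K, β ^ n = algebraMap F Ω (Algebra.norm F a) := by
  refine ⟨∏ σ : L ≃ₐ[F] L, σ.liftNormal Ω α, prod_mem fun σ _ ↦ ?_, ?_⟩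
  · exact normal_iff_forall_map_le'.1 ‹_› (σ.liftNormal Ω) ⟨α, hα, rfl⟩
  · rw [IsScalarTower.algebraMap_apply F L Ω, Algebra.norm_eq_prod_automorphisms, map_prod,
      ← Finset.prod_pow]
    refine Finset.prod_congr rfl fun σ _ ↦ ?_
    rw [← map_pow, hαn, AlgEquiv.liftNormal_commutes]

end Norm

variable [FiniteDimensional F L] [IsGalois F L] [IsSepClosed Ω] {ζ : L} (hζ : IsPrimitiveRoot ζ 2)
include hζ

variable (Ω) in
lemma exists_kummerField_apply_ne (hodd : Odd (finrank F L))
    {a : L} (ha : ∀ c, c ^ 2 ≠ a) {b : F} (hb : b ^ 2 = Algebra.norm F a) :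
    ∃ σ : L ≃ₐ[F] L, kummerField Ω 2 (σ a) ≠ kummerField Ω 2 a := by
  have : Fact (Nat.Prime 2) := ⟨Nat.prime_two⟩
  by_contra! h
  have hclass (σ : L ≃ₐ[F] L) : ∃ c, σ a = c ^ 2 * a := by
    obtain ⟨c, j, hc⟩ := exists_eq_pow_mul_pow_of_kummerField_le hζ ha (h σ).le
    obtain ⟨i, rfl | rfl⟩ := j.even_or_odd'
    · refine absurd ?_ (ha (σ.symm (c * a ^ i)))
      rw [← map_pow, AlgEquiv.symm_apply_eq, hc]
      ring
    · exact ⟨c * a ^ i, by rw [hc]; ring⟩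
  choose c hc using hclass
  obtain ⟨i, hi⟩ := hodd
  have hnorm : algebraMap F L b ^ 2 = ((∏ σ, c σ) * a ^ i) ^ 2 * a := by
    rw [← map_pow, hb, Algebra.norm_eq_prod_automorphisms, Finset.prod_congr rfl fun σ _ ↦ hc σ,
      Finset.prod_mul_distrib, Finset.prod_pow, Finset.prod_const, Finset.card_univ,
      ← Nat.card_eq_fintype_card, IsGalois.card_aut_eq_finrank, hi]
    ring
  have ha0 : a ≠ 0 := fun h ↦ ha 0 (by rw [h]; ring)
  have hc0 : (∏ σ, c σ) * a ^ i ≠ 0 := by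
    refine mul_ne_zero (Finset.prod_ne_zero_iff.2 fun σ _ h ↦ ha0 ?_) (pow_ne_zero i ha0)
    rw [← map_eq_zero σ, hc, h]
    ring
  exact ha (algebraMap F L b / ((∏ σ, c σ) * a ^ i))
    (by rw [div_pow, hnorm, mul_div_cancel_left₀ _ (pow_ne_zero 2 hc0)])

lemma kummerField_apply_le_sup (hL : finrank F L = 3) {a : L} (ha : a ≠ 0) {b : F}
    (hb : b ^ 2 = Algebra.norm F a) {σ : L ≃ₐ[F] L} (hσ : σ ≠ 1) (τ : L ≃ₐ[F] L) :
    kummerField Ω 2 (τ a) ≤ kummerField Ω 2 a ⊔ kummerField Ω 2 (σ a) := by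
  classical
  have : Fact (Nat.Prime 2) := ⟨Nat.prime_two⟩
  rcases eq_or_ne τ 1 with rfl | hτ1
  · exact le_sup_left
  rcases eq_or_ne τ σ with rfl | hτσ
  · exact le_sup_right
  have huniv : ({1, σ, τ} : Finset (L ≃ₐ[F] L)) = Finset.univ := by
    apply Finset.eq_univ_of_card
    rw [Finset.card_eq_three.2 ⟨1, σ, τ, hσ.symm, hτ1.symm, hτσ.symm, rfl⟩,
      ← Nat.card_eq_fintype_card, IsGalois.card_aut_eq_finrank, hL]
  have hnorm : algebraMap F L b ^ 2 = a * σ a * τ a := by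
    rw [← map_pow, hb, Algebra.norm_eq_prod_automorphisms, ← huniv,
      Finset.prod_insert (by simp [hσ.symm, hτ1.symm]), Finset.prod_pair hτσ.symm, mul_assoc]
    rfl
  obtain ⟨α, hα⟩ := exists_pow_eq_algebraMap Ω hζ a
  obtain ⟨β, hβ⟩ := exists_pow_eq_algebraMap Ω hζ (σ a)
  have hγ : (algebraMap L Ω (algebraMap F L b) / (α * β)) ^ 2 = algebraMap L Ω (τ a) := by
    rw [div_pow, mul_pow, hα, hβ, ← map_pow, hnorm, ← map_mul, ← map_div₀, mul_div_cancel_left₀]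
    exact mul_ne_zero ha ((map_ne_zero σ).2 ha)
  rw [kummerField_eq_adjoin hζ hγ, adjoin_simple_le_iff]
  exact div_mem (IntermediateField.algebraMap_mem _ _)
    (mul_mem ((le_sup_left : kummerField Ω 2 a ≤ _) (mem_kummerField hα))
      ((le_sup_right : kummerField Ω 2 (σ a) ≤ _) (mem_kummerField hβ)))

end KummerTower

section NormPow

open Module

variable (F L : Type*) [Field F] [Field L] [Algebra F L]

/-- The units of `L` whose norm to `F` is an `n`-th power. For `L / F` cyclic cubic, the `a` in
this group with `n = 2` are those for which `L(√a)` lies in an `A₄`-extension of `F`. -/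
noncomputable def normPow (n : ℕ) : Subgroup Lˣ :=
  (powMonoidHom n : Fˣ →* Fˣ).range.comap (Units.map (Algebra.norm F))

variable {F L}

lemma mem_normPow {n : ℕ} [NeZero n] {a : Lˣ} :
    a ∈ normPow F L n ↔ ∃ b, b ^ n = Algebra.norm F (a : L) := by
  constructor
  · rintro ⟨b, hb⟩
    exact ⟨b, congrArg Units.val hb⟩
  · rintro ⟨b, hb⟩
    have hb0 : b ≠ 0 := by
      rintro rfl
      rw [zero_pow (NeZero.ne n)] at hb
      exact (a.isUnit.map (Algebra.norm F)).ne_zero hb.symm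
    exact ⟨Units.mk0 b hb0, Units.ext hb⟩

lemma relIndex_normPow_mul_index [FiniteDimensional F L] {n : ℕ} (hn : n.Coprime (finrank F L)) :
    (powMonoidHom n : Lˣ →* Lˣ).range.relIndex (normPow F L n) *
      (powMonoidHom n : Fˣ →* Fˣ).range.index = (powMonoidHom n : Lˣ →* Lˣ).range.index := by
  let N : Lˣ →* Fˣ := Units.map (Algebra.norm F)
  have hN (x : Fˣ) : N (Units.map (algebraMap F L) x) = x ^ finrank F L :=
    Units.ext (Algebra.norm_algebraMap (x : F))
  have hle : (powMonoidHom n : Lˣ →* Lˣ).range ≤ normPow F L n := by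
    rintro _ ⟨x, rfl⟩
    exact ⟨N x, (map_pow N x n).symm⟩
  have htop : N.range ⊔ (powMonoidHom n : Fˣ →* Fˣ).range = ⊤ := by
    refine eq_top_iff.2 fun x _ ↦ ?_
    have hx : x = x ^ ((n : ℤ) * n.gcdA (finrank F L) + finrank F L * n.gcdB (finrank F L)) := by
      rw [← Nat.gcd_eq_gcd_ab, hn, Nat.cast_one, zpow_one]
    have hpow : x ^ n ∈ N.range ⊔ (powMonoidHom n : Fˣ →* Fˣ).range :=
      Subgroup.mem_sup_right ⟨x, rfl⟩
    have hnorm : x ^ finrank F L ∈ N.range ⊔ (powMonoidHom n : Fˣ →* Fˣ).range :=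
      Subgroup.mem_sup_left ⟨_, hN x⟩
    rw [hx, zpow_add, zpow_mul, zpow_mul, zpow_natCast, zpow_natCast]
    exact mul_mem (zpow_mem hpow _) (zpow_mem hnorm _)
  have hindex : (normPow F L n).index = (powMonoidHom n : Fˣ →* Fˣ).range.index := by
    rw [normPow, Subgroup.index_comap, ← Subgroup.relIndex_sup_right, htop,
      Subgroup.relIndex_top_right]
  rw [← hindex, Subgroup.relIndex_mul_index hle]

end NormPow

section A4Kummer

open IntermediateField Module

variable {F L Ω : Type*} [Field F] [Field L] [Field Ω] [Algebra F L] [Algebra F Ω] [Algebra L Ω]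
  [IsScalarTower F L Ω]

lemma finrank_restrictScalars (M : IntermediateField L Ω) :
    finrank F (M.restrictScalars F) = finrank F L * finrank L M :=
  (finrank_mul_finrank F L M).symm

lemma kummerField_apply_eq_of_normal [Normal F Ω] {n : ℕ} {a : L}
    [Normal F ((kummerField Ω n a).restrictScalars F)] (σ : L ≃ₐ[F] L) :
    kummerField Ω n (σ a) = kummerField Ω n a := by
  have h := map_restrictScalars_kummerField (σ.liftNormal_commutes Ω) n a
  rw [normal_iff_forall_map_eq'.1 ‹_›] at h
  exact (restrictScalars_injective F h).symm

variable [FiniteDimensional F L] [IsGalois F L] [IsGalois F Ω] [IsSepClosed Ω] {ζ : F}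
  (hζ : IsPrimitiveRoot ζ 2) {a : L}
include hζ

/- Otherwise `F(√N(a))` would be a quadratic subfield of `K`. -/
lemma exists_sq_eq_norm {K : IntermediateField F Ω}
    (hK : IsGaloisWithGroup (alternatingGroup (Fin 4)) K)
    (ha : (kummerField Ω 2 a).restrictScalars F ≤ K) : ∃ b, b ^ 2 = Algebra.norm F a := by
  have : Fact (Nat.Prime 2) := ⟨Nat.prime_two⟩
  have : IsGalois F K := hK.2.1
  have hζL := hζ.map_of_injective (algebraMap F L).injective
  obtain ⟨α, hα⟩ := exists_pow_eq_algebraMap Ω hζL a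
  have hα' : α ∈ kummerField Ω 2 a := mem_kummerField hα
  obtain ⟨β, hβK, hβ⟩ := exists_mem_pow_eq_norm K (ha hα') hα
  by_contra! hnorm
  have hle : kummerField Ω 2 (Algebra.norm F a) ≤ K := by
    rwa [kummerField_eq_adjoin hζ hβ, adjoin_simple_le_iff]
  exact finrank_ne_two_of_le hK hle ((finrank_kummerField_eq_iff hζ).2 hnorm)

lemma normal_restrictScalars_sup_kummerField (hL : finrank F L = 3) (ha : a ≠ 0) {b : F}
    (hb : b ^ 2 = Algebra.norm F a) {σ : L ≃ₐ[F] L} (hσ : σ ≠ 1) :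
    Normal F ((kummerField Ω 2 a ⊔ kummerField Ω 2 (σ a)).restrictScalars F) := by
  have hζL := hζ.map_of_injective (algebraMap F L).injective
  refine normal_iff_forall_map_le'.2 fun φ ↦ ?_
  have hφ (x : L) : φ (algebraMap L Ω x) = algebraMap L Ω (φ.restrictNormal L x) :=
    (φ.restrictNormal_commutes L x).symm
  rw [← restrictScalars_sup, IntermediateField.map_sup, map_restrictScalars_kummerField hφ,
    map_restrictScalars_kummerField hφ, restrictScalars_sup, restrictScalars_sup,
    restrictScalars_le_iff]
  exact sup_le (kummerField_apply_le_sup hζL hL ha hb hσ _)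
    (kummerField_apply_le_sup hζL hL ha hb hσ (φ.restrictNormal L * σ))

lemma exists_isGaloisWithGroup_of_sq_eq_norm (hL : finrank F L = 3) (ha : ∀ c, c ^ 2 ≠ a)
    {b : F} (hb : b ^ 2 = Algebra.norm F a) : ∃ K : IntermediateField F Ω,
      IsGaloisWithGroup (alternatingGroup (Fin 4)) K ∧
        (kummerField Ω 2 a).restrictScalars F ≤ K := by
  have : Fact (Nat.Prime 2) := ⟨Nat.prime_two⟩
  have hζL := hζ.map_of_injective (algebraMap F L).injective
  obtain ⟨σ, hσ⟩ := exists_kummerField_apply_ne Ω hζL (by rw [hL]; decide) ha hb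
  have ha0 : a ≠ 0 := fun h ↦ ha 0 (by rw [h]; ring)
  have hσa (c : L) : c ^ 2 ≠ σ a := fun h ↦
    ha (σ.symm c) (by rw [← map_pow, h, σ.symm_apply_apply])
  have := normal_restrictScalars_sup_kummerField (Ω := Ω) hζ hL ha0 hb (σ := σ)
    (by rintro rfl; exact hσ rfl)
  have : IsGalois F ((kummerField Ω 2 a ⊔ kummerField Ω 2 (σ a)).restrictScalars F) := {}
  have hfinrank :
      finrank F ((kummerField Ω 2 a ⊔ kummerField Ω 2 (σ a)).restrictScalars F) = 12 := by
    rw [finrank_restrictScalars, hL, finrank_sup_eq_four ((finrank_kummerField_eq_iff hζL).2 ha)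
      ((finrank_kummerField_eq_iff hζL).2 hσa) hσ.symm]
  have : IsGalois F ((⊥ : IntermediateField L Ω).restrictScalars F) :=
    .of_algEquiv ((botEquiv L Ω).symm.restrictScalars F)
  have hle : kummerField Ω 2 a ≤ kummerField Ω 2 a ⊔ kummerField Ω 2 (σ a) := le_sup_left
  rw [← restrictScalars_le_iff F] at hle
  refine ⟨_, isGaloisWithGroup_alternatingGroup (L := (⊥ : IntermediateField L Ω).restrictScalars F)
    hfinrank ((restrictScalars_le_iff F).2 bot_le) hle ?_ fun h ↦ ?_, hle⟩
  · rw [finrank_restrictScalars, hL, IntermediateField.finrank_bot]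
  · exact hσ (kummerField_apply_eq_of_normal σ)

lemma exists_isGaloisWithGroup_iff_exists_mem_normPow (hL : finrank F L = 3)
    {E : IntermediateField L Ω} (hE : finrank L E = 2) :
    (∃ K, IsGaloisWithGroup (alternatingGroup (Fin 4)) K ∧ E.restrictScalars F ≤ K) ↔
      ∃ a ∈ normPow F L 2, E = kummerField Ω 2 (a : L) := by
  have : Fact (Nat.Prime 2) := ⟨Nat.prime_two⟩
  have hζL := hζ.map_of_injective (algebraMap F L).injective
  constructor
  · rintro ⟨K, hK, hEK⟩
    have hgal : IsGalois L E := by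
      have := Algebra.isSeparable_tower_top_of_isSeparable F L Ω
      have := Algebra.isSeparable_tower_bot_of_isSeparable L E Ω
      have : Algebra.IsQuadraticExtension L E := ⟨hE⟩
      exact {}
    obtain ⟨a, rfl⟩ := (isGalois_iff_exists_kummerField hζL hE).1 hgal
    have ha0 : a ≠ 0 := by
      rintro rfl
      exact (finrank_kummerField_eq_iff hζL).1 hE 0 (zero_pow two_ne_zero)
    exact ⟨Units.mk0 a ha0, mem_normPow.2 (exists_sq_eq_norm hζ hK hEK), rfl⟩
  · rintro ⟨a, ha, rfl⟩
    obtain ⟨b, hb⟩ := mem_normPow.1 ha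
    exact exists_isGaloisWithGroup_of_sq_eq_norm hζ hL ((finrank_kummerField_eq_iff hζL).1 hE) hb

end A4Kummer

section A4Counting

open IntermediateField Module

variable {F Ω : Type*} [Field F] [Field Ω] [Algebra F Ω] [IsGalois F Ω]

lemma card_sextic_eq_three_mul_card :
    Nat.card {E : IntermediateField F Ω //
        finrank F E = 6 ∧ ∃ K, IsGaloisWithGroup (alternatingGroup (Fin 4)) K ∧ E ≤ K} =
      3 * Nat.card {K : IntermediateField F Ω //
        IsGaloisWithGroup (alternatingGroup (Fin 4)) K} := by
  refine card_eq_mul_card_of_existsUnique (fun E K ↦ E.1 ≤ K.1) three_ne_zero ?_ ?_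
  · rintro ⟨E, hE6, K, hK, hEK⟩
    refine ⟨⟨K, hK⟩, hEK, fun ⟨K', hK'⟩ hEK' ↦ Subtype.ext ?_⟩
    exact (normalClosure_eq_of_finrank_eq_six hK' hEK' hE6).symm.trans
      (normalClosure_eq_of_finrank_eq_six hK hEK hE6)
  · rintro ⟨K, hK⟩
    rw [← card_finrank_eq_six hK, Nat.card_congr (Equiv.subtypeSubtypeEquivSubtypeInter _ (· ≤ K))]
    exact Nat.card_congr (Equiv.subtypeEquivRight fun E ↦
      ⟨fun h ↦ ⟨h.2, h.1.1⟩, fun h ↦ ⟨⟨h.2, K, hK, h.1⟩, h.1⟩⟩)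

variable [IsSepClosed Ω] {ζ : F} (hζ : IsPrimitiveRoot ζ 2)
include hζ

lemma card_sextic_over_cubic {L : IntermediateField F Ω} [IsGalois F L] (hL : finrank F L = 3) :
    Nat.card {E : IntermediateField F Ω // (finrank F E = 6 ∧
        ∃ K, IsGaloisWithGroup (alternatingGroup (Fin 4)) K ∧ E ≤ K) ∧ L ≤ E} =
      (powMonoidHom 2 : Lˣ →* Lˣ).range.relIndex (normPow F L 2) - 1 := by
  have : Fact (Nat.Prime 2) := ⟨Nat.prime_two⟩
  have : FiniteDimensional F L := .of_finrank_pos (by rw [hL]; norm_num)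
  have hζL := hζ.map_of_injective (algebraMap F L).injective
  have hdeg (E : IntermediateField L Ω) :
      finrank F (E.restrictScalars F) = 6 ↔ finrank L E = 2 := by
    rw [finrank_restrictScalars, hL]
    omega
  rw [relIndex_sub_one_eq_mul_card_kummerField (Ω := Ω) hζL, Nat.add_one_sub_one, one_mul]
  refine Nat.card_congr <| (Equiv.subtypeEquivRight fun E ↦ and_comm).trans <|
    (Equiv.subtypeSubtypeEquivSubtypeInter (L ≤ ·) _).symm.trans <|
    ((extendScalars.orderIso L).toEquiv.subtypeEquiv fun E ↦ ?_)
  exact and_congr_left' (hdeg (extendScalars E.2)) |>.trans <| and_congr_right fun hE ↦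
    exists_isGaloisWithGroup_iff_exists_mem_normPow hζ hL hE

lemma card_sextic_eq_mul_card_cubic {c : ℕ} (hc : c ≠ 0)
    (hindex : ∀ L : IntermediateField F Ω, IsGalois F L → finrank F L = 3 →
      (powMonoidHom 2 : Lˣ →* Lˣ).range.relIndex (normPow F L 2) - 1 = c) :
    Nat.card {E : IntermediateField F Ω //
        finrank F E = 6 ∧ ∃ K, IsGaloisWithGroup (alternatingGroup (Fin 4)) K ∧ E ≤ K} =
      c * Nat.card {L : IntermediateField F Ω // finrank F L = 3 ∧ IsGalois F L} := by
  refine card_eq_mul_card_of_existsUnique (fun E L ↦ L.1 ≤ E.1) hc ?_ ?_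
  · rintro ⟨E, hE6, K, hK, hEK⟩
    obtain ⟨L, -, hL, hL3, huniq, hle⟩ := exists_cubic_le hK
    exact ⟨⟨L, hL3, hL⟩, hle E hEK hE6, fun ⟨L', hL'3, _⟩ hL'E ↦
      Subtype.ext (huniq L' (hL'E.trans hEK) hL'3)⟩
  · rintro ⟨L, hL3, hL⟩
    rw [← hindex L hL hL3, ← card_sextic_over_cubic hζ hL3]
    exact Nat.card_congr (Equiv.subtypeSubtypeEquivSubtypeInter _ (L ≤ ·))

end A4Counting

section PadicExtension

open Module

lemma relIndex_normPow_of_finrank_eq (p : ℕ) [hp : Fact p.Prime] {F L : Type*} [Field F] [Field L]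
    [Algebra ℚ_[p] F] [FiniteDimensional ℚ_[p] F] [Algebra F L] {ζ : F} (hζ : IsPrimitiveRoot ζ p)
    {n : ℕ} (hL : finrank F L = n + 1) (hn : p.Coprime (n + 1)) :
    (powMonoidHom p : Lˣ →* Lˣ).range.relIndex (normPow F L p) = p ^ (n * finrank ℚ_[p] F) := by
  have : FiniteDimensional F L := .of_finrank_pos (by omega)
  let : Algebra ℚ_[p] L := ((algebraMap F L).comp (algebraMap ℚ_[p] F)).toAlgebra
  have : IsScalarTower ℚ_[p] F L := .of_algebraMap_eq fun _ ↦ rfl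
  have : FiniteDimensional ℚ_[p] L := .trans ℚ_[p] F L
  have hmul := relIndex_normPow_mul_index (L := L) (hL ▸ hn)
  rw [index_range_powMonoidHom_prime p hζ,
    index_range_powMonoidHom_prime p (hζ.map_of_injective (algebraMap F L).injective),
    ← finrank_mul_finrank ℚ_[p] F L, hL] at hmul
  refine Nat.eq_of_mul_eq_mul_right (pow_pos hp.1.pos (finrank ℚ_[p] F + 2)) ?_
  rw [hmul]
  ring

end PadicExtension

theorem stmt5 (F : Type*) [Field F] [Algebra ℚ_[2] F] [FiniteDimensional ℚ_[2] F]
    (m : ℕ) (hm : Module.finrank ℚ_[2] F = m)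
    (hμ3 : ∃ ζ : F, IsPrimitiveRoot ζ 3) :
    nu F (alternatingGroup (Fin 4)) = 4 * (2 ^ (2 * m) - 1) / 3 := by
  obtain ⟨ζ, hζ⟩ := hμ3
  have : CharZero F := charZero_of_injective_algebraMap (algebraMap ℚ_[2] F).injective
  have hneg : IsPrimitiveRoot (-1 : F) 2 := .neg_one 0 (by norm_num)
  have hm0 : m ≠ 0 := hm ▸ Module.finrank_pos.ne'
  have hc : 2 ^ (2 * m) - 1 ≠ 0 := by
    have := Nat.one_lt_two_pow (n := 2 * m) (by omega)
    omega
  have hcubic : Nat.card {L : IntermediateField F (AlgebraicClosure F) //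
      Module.finrank F L = 3 ∧ IsGalois F L} = 4 := by
    have := index_sub_one_eq_mul_card_isGalois (Ω := AlgebraicClosure F) hζ
    rw [index_range_powMonoidHom_of_coprime 2 hζ (by norm_num)] at this
    omega
  have hsextic := card_sextic_eq_mul_card_cubic (Ω := AlgebraicClosure F) hneg hc fun L _ hL ↦ by
    rw [relIndex_normPow_of_finrank_eq 2 hneg (n := 2) hL (by norm_num), hm]
  rw [card_sextic_eq_three_mul_card, hcubic] at hsextic
  change Nat.card {K // IsGaloisWithGroup (alternatingGroup (Fin 4)) K} = _
  omega
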